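/- Assume the Riemann Hypothesis. There exists an absolute constant C > 0 such that for all real r, x and all σ ∈ [0,1] with r > 1, ln x > ln r, and √(x/r) ≥ 2657, there exists ã ∈ [(1 − σ·ln r/(ln x + σ·ln r))², (1 + ln r/(ln x − ln r))²] with |N^{FIX}_{r,σ}(x) − ã·(4x/ln²x)·(σ·ln r + 1 − 2·r^{−(1−σ)/2} + 1/r)| ≤ C·x^{3/4}·r^{1/4}, where N^{FIX}_{r,σ}(x) = #{(p,q) : p, q prime, √(x/r) < p ≤ √(r^σ·x), √(x/r) < q ≤ √(r^σ·x), and p·q ≤ x}. -/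

import Mathlib

/-- Prime-pair count of the fixed-bound notion: ordered pairs of primes `(p,q)` with both
coordinates in `(√(x/r), √(r^σ·x)]` and `p·q ≤ x`. -/
noncomputable def NFIX (r σ x : ℝ) : ℕ :=
  Nat.card {pq : ℕ × ℕ // pq.1.Prime ∧ pq.2.Prime ∧
    Real.sqrt (x / r) < (pq.1 : ℝ) ∧ (pq.1 : ℝ) ≤ Real.sqrt (r ^ σ * x) ∧
    Real.sqrt (x / r) < (pq.2 : ℝ) ∧ (pq.2 : ℝ) ≤ Real.sqrt (r ^ σ * x) ∧
    (pq.1 : ℝ) * (pq.2 : ℝ) ≤ x}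

/-!
If `ζ` has no zeros in `β < Re s`, then Borel–Carathéodory applied to `log ((s - 1) ζ(s))` bounds
the logarithmic derivative by `|t| ^ δ` to the right of `Re s = β`. Hence the Mellin inversion
integral for `∫_1^x (ψ(v) - v) dv` can be shifted to `Re s = β + δ`, and difference quotients in `x`
turn it into `θ(t) - t = O(t ^ (2 / 3))` as soon as `β < 2 / 3`.

Put `A = √(x / r)` and `B = √(r ^ σ * x)`. The prime pairs weighted by `log p * log q` have total
weight close to the area of `{(u, v) | A < u ≤ B, A < v ≤ B, u * v ≤ x}`, and every weight lies
between `log² A` and `log² B`. So the count lies between `area / log² B` and `area / log² A` up to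
an error, and the freedom in the factor `ã` is exactly the width of this range. The exponent `2 / 3`
suffices, although it alone gives an error above `x ^ (3 / 4) * r ^ (1 / 4)`: a positive proportion
of the pairs have weights well inside the range. When `r` is not too close to `1`, this gain
outweighs the error, and otherwise the region is so thin that the error is small.
-/

open Complex Set MeasureTheory Filter Topology Asymptotics

section Fract

lemma mellin_indicator_Ioi {a : ℝ} (ha : 0 ≤ a) (f : ℝ → ℂ) (s : ℂ) :
    mellin (indicator (Ioi a) f) s = ∫ u in Ioi a, (u : ℂ) ^ (s - 1) * f u := by
  have hind : (fun u : ℝ ↦ (u : ℂ) ^ (s - 1) • indicator (Ioi a) f u) =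
      indicator (Ioi a) fun u : ℝ ↦ (u : ℂ) ^ (s - 1) * f u := by
    ext u
    by_cases hu : u ∈ Ioi a <;> simp [hu]
  rw [mellin, hind, setIntegral_indicator measurableSet_Ioi, Ioi_inter_Ioi, sup_of_le_right ha]

lemma differentiableAt_mellin_indicator_Ioi_of_bounded {a C : ℝ} (ha : 0 < a) {f : ℝ → ℂ}
    (hfm : Measurable f) (hf : ∀ u, ‖f u‖ ≤ C) {s : ℂ} (hs : s.re < 0) :
    DifferentiableAt ℂ (mellin (indicator (Ioi a) f)) s := by
  have hbound (u : ℝ) : ‖indicator (Ioi a) f u‖ ≤ C :=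
    (norm_indicator_le_norm_self f u).trans (hf u)
  have hloc : LocallyIntegrable (indicator (Ioi a) f) :=
    (locallyIntegrable_const C).mono (hfm.indicator measurableSet_Ioi).aestronglyMeasurable
      (ae_of_all _ fun u ↦ (hbound u).trans (le_abs_self C))
  have htop : indicator (Ioi a) f =O[atTop] fun u : ℝ ↦ u ^ (-(0 : ℝ)) :=
    IsBigO.of_bound C (Eventually.of_forall fun u ↦ by simpa using hbound u)
  have hbot : indicator (Ioi a) f =O[𝓝[>] 0] fun u : ℝ ↦ u ^ (-(s.re - 1)) := by
    have hzero : indicator (Ioi a) f =ᶠ[𝓝[>] 0] fun _ ↦ 0 := by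
      filter_upwards [Ioo_mem_nhdsGT ha] with u hu
      exact indicator_of_notMem (notMem_Ioi.2 hu.2.le) f
    exact hzero.trans_isBigO (isBigO_zero _ _)
  exact mellin_differentiableAt_of_isBigO_rpow (hloc.locallyIntegrableOn _) htop hs hbot
    (by linarith)

/-- The function `s ↦ ∫_1^∞ {u} u ^ (-s - 1) du`, which continues `ζ` to `0 < Re s`. It is encoded
as a Mellin transform so that its holomorphy comes from the library. -/
noncomputable def fractMellin (s : ℂ) : ℂ :=
  mellin (indicator (Ioi 1) fun u ↦ ((Int.fract u : ℝ) : ℂ)) (-s)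

lemma fractMellin_eq_integral (s : ℂ) :
    fractMellin s = ∫ u in Ioi (1 : ℝ), (u : ℂ) ^ (-(s + 1)) * ((Int.fract u : ℝ) : ℂ) := by
  rw [fractMellin, mellin_indicator_Ioi zero_le_one, neg_add']

lemma norm_ofReal_fract_le_one (u : ℝ) : ‖((Int.fract u : ℝ) : ℂ)‖ ≤ 1 := by
  rw [norm_real, Real.norm_of_nonneg (Int.fract_nonneg u)]
  exact (Int.fract_lt_one u).le

lemma measurable_ofReal_fract : Measurable fun u : ℝ ↦ ((Int.fract u : ℝ) : ℂ) :=
  measurable_ofReal.comp measurable_fract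

lemma differentiableAt_fractMellin {s : ℂ} (hs : 0 < s.re) : DifferentiableAt ℂ fractMellin s :=
  (differentiableAt_mellin_indicator_Ioi_of_bounded one_pos measurable_ofReal_fract
    norm_ofReal_fract_le_one (by simpa using hs)).comp s differentiableAt_id.neg

lemma norm_fractMellin_le {s : ℂ} (hs : 0 < s.re) : ‖fractMellin s‖ ≤ 1 / s.re := by
  rw [fractMellin_eq_integral]
  calc
    _ ≤ ∫ u in Ioi (1 : ℝ), u ^ (-s.re - 1) := by
      refine norm_integral_le_of_norm_le (integrableOn_Ioi_rpow_of_lt (by linarith) one_pos) ?_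
      filter_upwards [ae_restrict_mem measurableSet_Ioi] with u hu
      have hre : (-(s + 1)).re = -s.re - 1 := by rw [neg_re, add_re, one_re]; ring
      rw [norm_mul, norm_cpow_eq_rpow_re_of_pos (one_pos.trans hu), hre]
      exact mul_le_of_le_one_right (Real.rpow_nonneg (one_pos.trans hu).le _)
        (norm_ofReal_fract_le_one u)
    _ = 1 / s.re := by
      rw [integral_Ioi_rpow_of_lt (by linarith) one_pos]
      simp

lemma cpow_neg_eq_mul_cpow {v : ℝ} (hv : 0 < v) (s : ℂ) :
    (v : ℂ) ^ (-s) = v * (v : ℂ) ^ (-(s + 1)) := by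
  rw [show -s = 1 + -(s + 1) by ring, cpow_add _ _ (mod_cast hv.ne'), cpow_one]

lemma integral_floor_mul_cpow_eq_sub_fractMellin {s : ℂ} (hs : 1 < s.re) :
    ∫ u in Ioi (1 : ℝ), (⌊u⌋₊ : ℂ) * (u : ℂ) ^ (-(s + 1)) =
      (∫ u in Ioi (1 : ℝ), (u : ℂ) ^ (-s)) - fractMellin s := by
  have hint : IntegrableOn (fun u : ℝ ↦ (u : ℂ) ^ (-(s + 1)) * ((Int.fract u : ℝ) : ℂ)) (Ioi 1) :=
    (integrableOn_Ioi_cpow_of_lt (by rw [neg_re, add_re, one_re]; linarith) one_pos).mul_bdd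
      measurable_ofReal_fract.aestronglyMeasurable (ae_of_all _ norm_ofReal_fract_le_one)
  rw [fractMellin_eq_integral, ← integral_sub
    (integrableOn_Ioi_cpow_of_lt (by simpa using hs) one_pos) hint]
  refine setIntegral_congr_fun measurableSet_Ioi fun u hu ↦ ?_
  have hu0 : 0 < u := one_pos.trans hu
  have hfloor : (⌊u⌋₊ : ℂ) = u - ((Int.fract u : ℝ) : ℂ) := by
    rw [← ofReal_natCast, natCast_floor_eq_intCast_floor hu0.le, Int.fract]
    push_cast
    ring
  rw [cpow_neg_eq_mul_cpow hu0 s, hfloor]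
  ring

end Fract

section Zeta

lemma riemannZeta₁_eq_sub_mul {s : ℂ} (hs : s ≠ 1) : riemannZeta₁ s = (s - 1) * riemannZeta s := by
  rw [riemannZeta_eq_inv_sub_mul hs, mul_inv_cancel_left₀ (sub_ne_zero.2 hs)]

lemma ne_one_of_one_lt_re {s : ℂ} (hs : 1 < s.re) : s ≠ 1 := by
  rintro rfl
  exact lt_irrefl _ hs

lemma riemannZeta₁_eq_sub_fractMellin_of_one_lt_re {s : ℂ} (hs : 1 < s.re) :
    riemannZeta₁ s = s - s * (s - 1) * fractMellin s := by
  have habel : LSeries 1 s =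
      s * ∫ u in Ioi (1 : ℝ), (∑ k ∈ Finset.Icc 1 ⌊u⌋₊, (1 : ℕ → ℂ) k) * u ^ (-(s + 1)) :=
    LSeries_eq_mul_integral' _ zero_le_one hs
      (IsBigO.of_bound 1 (Eventually.of_forall fun n ↦ by simp))
  simp only [LSeries_one_eq_riemannZeta hs, Pi.one_apply, Finset.sum_const, Nat.card_Icc,
    add_tsub_cancel_right, nsmul_eq_mul, mul_one] at habel
  rw [integral_floor_mul_cpow_eq_sub_fractMellin hs,
    integral_Ioi_cpow_of_lt (by simpa using hs) one_pos, ofReal_one, one_cpow] at habel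
  have hs1 : s - 1 ≠ 0 := sub_ne_zero.2 (ne_one_of_one_lt_re hs)
  rw [riemannZeta₁_eq_sub_mul (ne_one_of_one_lt_re hs), habel, show -s + 1 = -(s - 1) by ring]
  field_simp

lemma riemannZeta₁_eq_sub_fractMellin {s : ℂ} (hs : 0 < s.re) :
    riemannZeta₁ s = s - s * (s - 1) * fractMellin s := by
  have hopen : IsOpen {z : ℂ | 0 < z.re} := isOpen_lt continuous_const continuous_re
  have hfract : AnalyticOnNhd ℂ (fun z ↦ z - z * (z - 1) * fractMellin z) {z : ℂ | 0 < z.re} := by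
    refine DifferentiableOn.analyticOnNhd (fun z hz ↦ ?_) hopen
    have := (differentiableAt_fractMellin hz).differentiableWithinAt (s := {z : ℂ | 0 < z.re})
    fun_prop
  refine (differentiable_riemannZeta₁.differentiableOn.analyticOnNhd
    hopen).eqOn_of_preconnected_of_eventuallyEq hfract
    (convex_halfSpace_re_gt 0).isPreconnected (z₀ := 2) (by simp) ?_ hs
  filter_upwards [(isOpen_lt continuous_const continuous_re).mem_nhds
    (show (2 : ℂ) ∈ {z : ℂ | 1 < z.re} by simp)] with z hz
  exact riemannZeta₁_eq_sub_fractMellin_of_one_lt_re hz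

lemma norm_riemannZeta₁_le {s : ℂ} (hs : 0 < s.re) :
    ‖riemannZeta₁ s‖ ≤ ‖s‖ + ‖s‖ * ‖s - 1‖ / s.re := by
  rw [riemannZeta₁_eq_sub_fractMellin hs]
  calc
    _ ≤ ‖s‖ + ‖s‖ * ‖s - 1‖ * ‖fractMellin s‖ := by
      rw [← norm_mul, ← norm_mul]
      exact norm_sub_le _ _
    _ ≤ ‖s‖ + ‖s‖ * ‖s - 1‖ * (1 / s.re) := by gcongr; exact norm_fractMellin_le hs
    _ = _ := by ring

lemma riemannZeta₁_ne_zero {β : ℝ} (hζ : ∀ s : ℂ, β < s.re → riemannZeta s ≠ 0) {s : ℂ}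
    (hs : β < s.re) : riemannZeta₁ s ≠ 0 := by
  rcases eq_or_ne s 1 with rfl | h1
  · simp
  · rw [riemannZeta₁_eq_sub_mul h1]
    exact mul_ne_zero (sub_ne_zero.2 h1) (hζ s hs)

end Zeta

section LogDeriv

open Metric

variable {f : ℂ → ℂ} {c : ℂ} {R : ℝ}

lemma exists_log_of_ne_zero_on_ball (hR : 0 < R) (hf : DifferentiableOn ℂ f (ball c R))
    (hne : ∀ z ∈ ball c R, f z ≠ 0) :
    ∃ g : ℂ → ℂ, g c = 0 ∧ (∀ z ∈ ball c R, HasDerivAt g (logDeriv f z) z) ∧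
      ∀ z ∈ ball c R, f z = f c * exp (g z) := by
  have hlog : DifferentiableOn ℂ (logDeriv f) (ball c R) := (hf.deriv isOpen_ball).div hf hne
  obtain ⟨g, hgc, hg⟩ := hlog.isExactOn_ball.with_val_at c 0
  refine ⟨g, hgc, hg, fun z hz ↦ ?_⟩
  have hderiv (w : ℂ) (hw : w ∈ ball c R) : HasDerivAt (fun z ↦ f z * exp (-g z)) 0 w := by
    have hfw := (hf.differentiableAt (isOpen_ball.mem_nhds hw)).hasDerivAt
    have hnew := hne w hw
    have hzero : deriv f w * exp (-g w) + f w * (exp (-g w) * -logDeriv f w) = 0 := by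
      rw [logDeriv_apply]
      field_simp
      ring
    exact hzero ▸ hfw.fun_mul (hg w hw).fun_neg.cexp
  have hconst : f z * exp (-g z) = f c * exp (-g c) :=
    isOpen_ball.is_const_of_deriv_eq_zero (convex_ball c R).isPreconnected
      (fun w hw ↦ (hderiv w hw).differentiableAt.differentiableWithinAt)
      (fun w hw ↦ (hderiv w hw).deriv) hz (mem_ball_self hR)
  rw [hgc, neg_zero, exp_zero, mul_one] at hconst
  rw [← hconst, mul_assoc, ← exp_add, neg_add_cancel, exp_zero, mul_one]

lemma norm_le_of_re_le_on_ball {g : ℂ → ℂ} {M : ℝ} (hM : 0 < M)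
    (hg : DifferentiableOn ℂ g (ball c R)) (hgc : g c = 0) (hre : ∀ z ∈ ball c R, (g z).re ≤ M)
    {z : ℂ} (hz : z ∈ ball c R) : ‖g z‖ ≤ 2 * M * ‖z - c‖ / (R - ‖z - c‖) := by
  have hmaps : MapsTo (c + ·) (ball 0 R) (ball c R) := fun w hw ↦ by simpa using hw
  have hBC := borelCaratheodory_zero (f := fun w ↦ g (c + w)) (z := z - c) hM
    (hg.comp (by fun_prop) hmaps) (fun w hw ↦ hre _ (hmaps hw)) (pos_of_mem_ball hz)
    (by simpa [dist_eq_norm] using hz) (by simpa using hgc)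
  simpa only [add_sub_cancel] using hBC

lemma norm_logDeriv_le_of_ne_zero_on_ball {M : ℝ} (hM : 1 < M)
    (hf : DifferentiableOn ℂ f (ball c R)) (hne : ∀ z ∈ ball c R, f z ≠ 0)
    (hbound : ∀ z ∈ ball c R, ‖f z‖ ≤ M * ‖f c‖) {s : ℂ} (hs : s ∈ ball c R) :
    ‖logDeriv f s‖ ≤ 8 * R * Real.log M / (R - ‖s - c‖) ^ 2 := by
  have hR : 0 < R := pos_of_mem_ball hs
  obtain ⟨g, hgc, hg, hfg⟩ := exists_log_of_ne_zero_on_ball hR hf hne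
  have hgd : DifferentiableOn ℂ g (ball c R) :=
    fun z hz ↦ (hg z hz).differentiableAt.differentiableWithinAt
  have hre (z : ℂ) (hz : z ∈ ball c R) : (g z).re ≤ Real.log M := by
    rw [Real.le_log_iff_exp_le (by linarith), ← norm_exp]
    refine le_of_mul_le_mul_left ?_ (norm_pos_iff.2 (hne c (mem_ball_self hR)))
    rw [← norm_mul, ← hfg z hz, mul_comm]
    exact hbound z hz
  have hsR : ‖s - c‖ < R := mem_ball_iff_norm.1 hs
  set η : ℝ := (R - ‖s - c‖) / 2 with hη
  have hη0 : 0 < η := by linarith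
  have hclosed : closedBall s η ⊆ ball c R := fun w hw ↦ by
    rw [mem_closedBall_iff_norm] at hw
    rw [mem_ball_iff_norm]
    linarith [norm_sub_le_norm_sub_add_norm_sub w s c]
  have hsphere (w : ℂ) (hw : w ∈ sphere s η) : ‖g w‖ ≤ 2 * Real.log M * R / η := by
    refine (norm_le_of_re_le_on_ball (Real.log_pos hM) hgd hgc hre
      (hclosed (sphere_subset_closedBall hw))).trans ?_
    have htri := norm_sub_le_norm_sub_add_norm_sub w s c
    rw [mem_sphere_iff_norm.1 hw] at htri
    have := Real.log_pos hM
    gcongr <;> linarith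
  rw [← (hg s hs).deriv]
  refine (norm_deriv_le_of_forall_mem_sphere_norm_le hη0
    (hgd.mono (closure_ball_subset_closedBall.trans hclosed)).diffContOnCl hsphere).trans_eq ?_
  rw [hη]
  field_simp
  ring

end LogDeriv

section ZetaLogDeriv

lemma norm_riemannZeta_sub_one_le {s : ℂ} (hs : 2 ≤ s.re) :
    ‖riemannZeta s - 1‖ ≤ Real.pi ^ 2 / 6 - 1 := by
  have hbasel : HasSum (fun n : ℕ ↦ 1 / ((n : ℝ) + 1) ^ 2) (Real.pi ^ 2 / 6) := by
    simpa using (hasSum_nat_add_iff' 1).2 hasSum_zeta_two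
  have htail : HasSum (fun n : ℕ ↦ 1 / (((n + 1 : ℕ) : ℝ) + 1) ^ 2) (Real.pi ^ 2 / 6 - 1) := by
    simpa using (hasSum_nat_add_iff' 1).2 hbasel
  have hterm (n : ℕ) : ‖1 / ((n : ℂ) + 1) ^ s‖ ≤ 1 / ((n : ℝ) + 1) ^ 2 := by
    rw [norm_div, norm_one, show (n : ℂ) + 1 = ((n + 1 : ℝ) : ℂ) by push_cast; rfl,
      norm_cpow_eq_rpow_re_of_pos (by positivity), ← Real.rpow_two]
    gcongr
    linarith [n.cast_nonneg (α := ℝ)]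
  have hsum : Summable fun n : ℕ ↦ 1 / ((n : ℂ) + 1) ^ s := hbasel.summable.of_norm_bounded hterm
  rw [zeta_eq_tsum_one_div_nat_add_one_cpow (by linarith), hsum.tsum_eq_zero_add]
  simpa using tsum_of_norm_bounded htail fun n ↦ hterm (n + 1)

lemma one_third_le_norm_riemannZeta₁ {s : ℂ} (hs : 2 ≤ s.re) : 1 / 3 ≤ ‖riemannZeta₁ s‖ := by
  have hzeta : 1 / 3 ≤ ‖riemannZeta s‖ := by
    have hsub := norm_riemannZeta_sub_one_le hs
    have htri := norm_sub_norm_le (1 : ℂ) (riemannZeta s)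
    rw [norm_one, norm_sub_rev] at htri
    nlinarith [Real.pi_lt_d2, Real.pi_pos]
  have hone : 1 ≤ ‖s - 1‖ := by
    have hre := re_le_norm (s - 1)
    rw [sub_re, one_re] at hre
    linarith
  rw [riemannZeta₁_eq_sub_mul (ne_one_of_one_lt_re (by linarith)), norm_mul]
  nlinarith

lemma norm_riemannZeta₁_le_sq {s : ℂ} {τ : ℝ} (hre : 1 / 2 ≤ s.re)
    (hs : ‖s - (2 + τ * I)‖ ≤ 3 / 2) :
    ‖riemannZeta₁ s‖ ≤ 3 * (|τ| + 5) ^ 2 := by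
  have hcentre : ‖(2 + τ * I : ℂ)‖ ≤ 2 + |τ| := (norm_add_le _ _).trans (by simp)
  have hnorm : ‖s‖ ≤ |τ| + 7 / 2 := by linarith [norm_le_norm_sub_add s (2 + τ * I)]
  have hnorm_sub : ‖s - 1‖ ≤ |τ| + 9 / 2 := by
    have := norm_sub_le s 1
    rw [norm_one] at this
    linarith
  calc
    _ ≤ ‖s‖ + ‖s‖ * ‖s - 1‖ / s.re := norm_riemannZeta₁_le (by linarith)
    _ ≤ (|τ| + 7 / 2) + (|τ| + 7 / 2) * (|τ| + 9 / 2) / (1 / 2) := by gcongr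
    _ ≤ _ := by nlinarith [abs_nonneg τ]

lemma log_nine_mul_sq_le {u δ : ℝ} (hu : 0 ≤ u) (hδ : 0 < δ) :
    Real.log (9 * (u + 5) ^ 2) ≤ 2 * 15 ^ δ / δ * (1 + u) ^ δ := by
  calc
    _ ≤ Real.log ((15 * (1 + u)) ^ 2) := Real.log_le_log (by positivity) (by nlinarith)
    _ = 2 * Real.log (15 * (1 + u)) := by rw [Real.log_pow]; norm_num
    _ ≤ 2 * ((15 * (1 + u)) ^ δ / δ) := by gcongr; exact Real.log_le_rpow_div (by positivity) hδ
    _ = _ := by rw [Real.mul_rpow (by norm_num) (by positivity)]; ring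

variable {β : ℝ}

lemma norm_logDeriv_riemannZeta₁_le_log (hβ : 1 / 2 ≤ β)
    (hζ : ∀ s : ℂ, β < s.re → riemannZeta s ≠ 0) {s : ℂ} (hs : β < s.re) (hs2 : s.re ≤ 2) :
    ‖logDeriv riemannZeta₁ s‖ ≤ 12 * Real.log (9 * (|s.im| + 5) ^ 2) / (s.re - β) ^ 2 := by
  set c : ℂ := 2 + s.im * I with hc
  have hdist : ‖s - c‖ = 2 - s.re := by
    rw [show s - c = ((s.re - 2 : ℝ) : ℂ) by apply Complex.ext <;> simp [hc], norm_real,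
      Real.norm_of_nonpos (by linarith)]
    ring
  have hball (z : ℂ) (hz : z ∈ Metric.ball c (2 - β)) : β < z.re := by
    rw [mem_ball_iff_norm] at hz
    have hre := (abs_le.1 (abs_re_le_norm (z - c))).1
    rw [sub_re, show c.re = 2 by simp [hc]] at hre
    linarith
  have hbound (z : ℂ) (hz : z ∈ Metric.ball c (2 - β)) :
      ‖riemannZeta₁ z‖ ≤ 9 * (|s.im| + 5) ^ 2 * ‖riemannZeta₁ c‖ := by
    have hup := norm_riemannZeta₁_le_sq (τ := s.im) (hβ.trans (hball z hz).le)
      ((mem_ball_iff_norm.1 hz).le.trans (by linarith))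
    have hlow : 1 / 3 ≤ ‖riemannZeta₁ c‖ := one_third_le_norm_riemannZeta₁ (by simp [hc])
    nlinarith [sq_nonneg (|s.im| + 5)]
  have hM : 1 < 9 * (|s.im| + 5) ^ 2 := by nlinarith [abs_nonneg s.im]
  refine (norm_logDeriv_le_of_ne_zero_on_ball hM differentiable_riemannZeta₁.differentiableOn
    (fun z hz ↦ riemannZeta₁_ne_zero hζ (hball z hz)) hbound
    (mem_ball_iff_norm.2 (by linarith))).trans ?_
  rw [hdist, show 2 - β - (2 - s.re) = s.re - β by ring]
  have := Real.log_pos hM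
  gcongr
  linarith

lemma exists_norm_logDeriv_riemannZeta₁_le (hβ : 1 / 2 ≤ β)
    (hζ : ∀ s : ℂ, β < s.re → riemannZeta s ≠ 0) {δ : ℝ} (hδ : 0 < δ) :
    ∃ C : ℝ, 0 < C ∧ ∀ s : ℂ, β + δ ≤ s.re → s.re ≤ 2 →
      ‖logDeriv riemannZeta₁ s‖ ≤ C * (1 + |s.im|) ^ δ := by
  refine ⟨12 * (2 * 15 ^ δ / δ) / δ ^ 2, by positivity, fun s hs hs2 ↦ ?_⟩
  calc
    _ ≤ 12 * Real.log (9 * (|s.im| + 5) ^ 2) / (s.re - β) ^ 2 :=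
      norm_logDeriv_riemannZeta₁_le_log hβ hζ (by linarith) hs2
    _ ≤ 12 * (2 * 15 ^ δ / δ * (1 + |s.im|) ^ δ) / δ ^ 2 := by
      gcongr
      · exact log_nine_mul_sq_le (abs_nonneg _) hδ
      · linarith
    _ = _ := by ring

end ZetaLogDeriv

section Primitive

variable {f : ℝ → ℂ} {a : ℂ}

lemma integrable_indicator_lt_mul_cpow (hfm : Measurable f) (ha : 0 < a.re)
    (hf : IntegrableOn (fun v : ℝ ↦ f v * (v : ℂ) ^ (-a)) (Ioi 1)) :
    Integrable (indicator {p : ℝ × ℝ | p.1 < p.2} fun p ↦ f p.1 * (p.2 : ℂ) ^ (-(a + 1)))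
      ((volume.restrict (Ioi 1)).prod (volume.restrict (Ioi 1))) := by
  have hmeas : Measurable (indicator {p : ℝ × ℝ | p.1 < p.2}
      fun p ↦ f p.1 * (p.2 : ℂ) ^ (-(a + 1))) :=
    Measurable.indicator (by fun_prop) (measurableSet_lt measurable_fst measurable_snd)
  have hslice (v u : ℝ) : indicator {p : ℝ × ℝ | p.1 < p.2}
      (fun p ↦ f p.1 * (p.2 : ℂ) ^ (-(a + 1))) (v, u) =
      indicator (Ioi v) (fun u : ℝ ↦ f v * (u : ℂ) ^ (-(a + 1))) u := rfl
  rw [integrable_prod_iff hmeas.aestronglyMeasurable]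
  simp only [hslice, norm_indicator_eq_indicator_norm]
  refine ⟨ae_of_all _ fun v ↦ ?_, (hf.norm.mul_const (1 / a.re)).congr ?_⟩
  · exact ((integrableOn_Ioi_cpow_of_lt (by simpa using ha) one_pos).const_mul _).indicator
      measurableSet_Ioi
  · filter_upwards [ae_restrict_mem measurableSet_Ioi] with v (hv : 1 < v)
    have hnorm : EqOn (fun u : ℝ ↦ ‖f v * (u : ℂ) ^ (-(a + 1))‖)
        (fun u ↦ ‖f v‖ * u ^ (-a.re - 1)) (Ioi v) := fun u (hu : v < u) ↦ by
      simp only [norm_mul, norm_cpow_eq_rpow_re_of_pos (by linarith : 0 < u), neg_add', sub_re,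
        neg_re, one_re]
    rw [setIntegral_indicator measurableSet_Ioi, Ioi_inter_Ioi, sup_of_le_right hv.le,
      setIntegral_congr_fun measurableSet_Ioi hnorm, integral_const_mul,
      integral_Ioi_rpow_of_lt (by linarith) (by linarith), norm_mul,
      norm_cpow_eq_rpow_re_of_pos (by linarith), neg_re, sub_add_cancel, neg_div_neg_eq]
    ring

lemma integral_indicator_lt_mul_cpow_left {u : ℝ} (hu : 1 ≤ u) :
    ∫ v in Ioi 1, indicator {p : ℝ × ℝ | p.1 < p.2}
      (fun p ↦ f p.1 * (p.2 : ℂ) ^ (-(a + 1))) (v, u) =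
      (∫ v in 1..u, f v) * (u : ℂ) ^ (-(a + 1)) := by
  change ∫ v in Ioi 1, indicator (Iio u) (fun v ↦ f v * (u : ℂ) ^ (-(a + 1))) v = _
  rw [setIntegral_indicator measurableSet_Iio, Ioi_inter_Iio, ← integral_Ioc_eq_integral_Ioo,
    ← intervalIntegral.integral_of_le hu, intervalIntegral.integral_mul_const]

lemma integral_indicator_lt_mul_cpow_right (ha : 0 < a.re) {v : ℝ} (hv : 1 ≤ v) :
    ∫ u in Ioi 1, indicator {p : ℝ × ℝ | p.1 < p.2}
      (fun p ↦ f p.1 * (p.2 : ℂ) ^ (-(a + 1))) (v, u) = f v * (v : ℂ) ^ (-a) / a := by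
  change ∫ u in Ioi 1, indicator (Ioi v) (fun u : ℝ ↦ f v * (u : ℂ) ^ (-(a + 1))) u = _
  rw [setIntegral_indicator measurableSet_Ioi, Ioi_inter_Ioi, sup_of_le_right hv,
    integral_const_mul, integral_Ioi_cpow_of_lt (by simpa using ha) (by linarith), neg_add,
    neg_add_cancel_right, neg_div_neg_eq, mul_div_assoc]

lemma integrableOn_primitive_mul_cpow (hfm : Measurable f) (ha : 0 < a.re)
    (hf : IntegrableOn (fun v : ℝ ↦ f v * (v : ℂ) ^ (-a)) (Ioi 1)) :
    IntegrableOn (fun u : ℝ ↦ (∫ v in 1..u, f v) * (u : ℂ) ^ (-(a + 1))) (Ioi 1) := by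
  refine (integrable_indicator_lt_mul_cpow hfm ha hf).integral_prod_right.congr ?_
  filter_upwards [ae_restrict_mem measurableSet_Ioi] with u hu
  exact integral_indicator_lt_mul_cpow_left (mem_Ioi.1 hu).le

lemma integral_primitive_mul_cpow (hfm : Measurable f) (ha : 0 < a.re)
    (hf : IntegrableOn (fun v : ℝ ↦ f v * (v : ℂ) ^ (-a)) (Ioi 1)) :
    ∫ u in Ioi (1 : ℝ), (∫ v in 1..u, f v) * (u : ℂ) ^ (-(a + 1)) =
      (∫ v in Ioi (1 : ℝ), f v * (v : ℂ) ^ (-a)) / a := by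
  have hswap := integral_integral_swap
    (f := fun v u ↦ indicator {p : ℝ × ℝ | p.1 < p.2}
      (fun p ↦ f p.1 * (p.2 : ℂ) ^ (-(a + 1))) (v, u))
    (integrable_indicator_lt_mul_cpow hfm ha hf)
  rw [setIntegral_congr_fun measurableSet_Ioi fun v hv ↦
      integral_indicator_lt_mul_cpow_right ha (mem_Ioi.1 hv).le,
    setIntegral_congr_fun measurableSet_Ioi fun u hu ↦
      integral_indicator_lt_mul_cpow_left (mem_Ioi.1 hu).le, integral_div] at hswap
  exact hswap.symm

end Primitive

section PsiError

/-- The error term `ψ(v) - v` in the prime number theorem. -/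
noncomputable def psiError (v : ℝ) : ℝ := Chebyshev.psi v - v

lemma measurable_psiError : Measurable psiError :=
  Chebyshev.psi_mono.measurable.sub measurable_id

lemma intervalIntegrable_psiError (a b : ℝ) : IntervalIntegrable psiError volume a b :=
  Chebyshev.psi_mono.intervalIntegrable.sub (continuous_id.intervalIntegrable a b)

lemma log_four_lt_two : Real.log 4 < 2 := by
  rw [show (4 : ℝ) = 2 ^ 2 by norm_num, Real.log_pow]
  push_cast
  linarith [Real.log_two_lt_d9]

lemma abs_psiError_le {v : ℝ} (hv : 0 ≤ v) : |psiError v| ≤ 7 * v := by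
  have hpsi := Chebyshev.psi_le_const_mul_self hv
  have hnonneg := Chebyshev.psi_nonneg v
  rw [psiError, abs_le]
  constructor <;> nlinarith [log_four_lt_two]

variable {s : ℂ}

lemma integrableOn_psiError_mul_cpow (hs : 1 < s.re) :
    IntegrableOn (fun v : ℝ ↦ (psiError v : ℂ) * (v : ℂ) ^ (-(s + 1))) (Ioi 1) := by
  have hmeas := measurable_psiError
  have hint : IntegrableOn (fun v : ℝ ↦ 7 * ‖(v : ℂ) ^ (-s)‖) (Ioi 1) :=
    (integrableOn_Ioi_cpow_of_lt (by simpa using hs) one_pos).norm.const_mul 7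
  refine Integrable.mono' hint (by fun_prop) ?_
  filter_upwards [ae_restrict_mem measurableSet_Ioi] with v (hv : 1 < v)
  have hv0 : 0 < v := one_pos.trans hv
  rw [cpow_neg_eq_mul_cpow hv0 s, norm_mul, norm_mul, norm_real, norm_real,
    Real.norm_of_nonneg hv0.le, ← mul_assoc]
  exact mul_le_mul_of_nonneg_right (abs_psiError_le hv0.le) (norm_nonneg _)

lemma mul_integral_psi_mul_cpow (hs : 1 < s.re) :
    s * ∫ v in Ioi (1 : ℝ), (Chebyshev.psi v : ℂ) * (v : ℂ) ^ (-(s + 1)) =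
      -logDeriv riemannZeta s := by
  have hbigO : (fun n : ℕ ↦ ∑ k ∈ Finset.Icc 1 n, ArithmeticFunction.vonMangoldt k)
      =O[atTop] fun n ↦ (n : ℝ) ^ (1 : ℝ) := by
    refine IsBigO.of_bound (Real.log 4 + 4) (Eventually.of_forall fun n ↦ ?_)
    have hpsi := Chebyshev.psi_le_const_mul_self (n.cast_nonneg (α := ℝ))
    have hnonneg := Chebyshev.psi_nonneg (n : ℝ)
    rw [Chebyshev.psi, Nat.floor_natCast, ← Finset.Icc_add_one_left_eq_Ioc, zero_add]
      at hpsi hnonneg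
    rwa [Real.rpow_one, Real.norm_of_nonneg hnonneg, Real.norm_of_nonneg n.cast_nonneg]
  have habel := LSeries_eq_mul_integral_of_nonneg _ zero_le_one hs hbigO
    fun _ ↦ ArithmeticFunction.vonMangoldt_nonneg
  have hsum (t : ℝ) : ∑ k ∈ Finset.Icc 1 ⌊t⌋₊, (ArithmeticFunction.vonMangoldt k : ℂ) =
      (Chebyshev.psi t : ℂ) := by
    rw [Chebyshev.psi, ofReal_sum, ← Finset.Icc_add_one_left_eq_Ioc, zero_add]
  simp only [hsum] at habel
  rw [← habel, ArithmeticFunction.LSeries_vonMangoldt_eq_deriv_riemannZeta_div hs, logDeriv_apply,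
    neg_div]

lemma logDeriv_riemannZeta₁ (hs1 : s ≠ 1) (hs : riemannZeta s ≠ 0) :
    logDeriv riemannZeta₁ s = 1 / (s - 1) + logDeriv riemannZeta s := by
  have heq : riemannZeta₁ =ᶠ[𝓝 s] fun z ↦ (z - 1) * riemannZeta z := by
    filter_upwards [isOpen_ne.mem_nhds hs1] with z hz using riemannZeta₁_eq_sub_mul hz
  rw [logDeriv_apply, heq.deriv_eq, heq.eq_of_nhds, ← logDeriv_apply,
    logDeriv_mul (f := (· - 1)) s (sub_ne_zero.2 hs1) hs (by fun_prop)
      (differentiableAt_riemannZeta hs1)]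
  simp [logDeriv_apply]

lemma integral_psiError_mul_cpow (hs : 1 < s.re) :
    ∫ v in Ioi (1 : ℝ), (psiError v : ℂ) * (v : ℂ) ^ (-(s + 1)) =
      (-logDeriv riemannZeta₁ s - 1) / s := by
  have hs1 : s ≠ 1 := ne_one_of_one_lt_re hs
  have hs0 : s ≠ 0 := fun h ↦ by simp [h] at hs; linarith
  have hsplit : ∫ v in Ioi (1 : ℝ), (Chebyshev.psi v : ℂ) * (v : ℂ) ^ (-(s + 1)) =
      (∫ v in Ioi (1 : ℝ), (psiError v : ℂ) * (v : ℂ) ^ (-(s + 1))) +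
        ∫ v in Ioi (1 : ℝ), (v : ℂ) ^ (-s) := by
    rw [← integral_add (integrableOn_psiError_mul_cpow hs)
      (integrableOn_Ioi_cpow_of_lt (by simpa using hs) one_pos)]
    refine setIntegral_congr_fun measurableSet_Ioi fun v hv ↦ ?_
    simp only [psiError, ofReal_sub]
    rw [cpow_neg_eq_mul_cpow (one_pos.trans hv) s]
    ring
  have hpsi := mul_integral_psi_mul_cpow hs
  rw [hsplit, integral_Ioi_cpow_of_lt (by simpa using hs) one_pos, ofReal_one, one_cpow,
    show -s + 1 = -(s - 1) by ring, neg_div_neg_eq, mul_add] at hpsi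
  rw [logDeriv_riemannZeta₁ hs1 (riemannZeta_ne_zero_of_one_lt_re hs), eq_div_iff hs0, mul_comm,
    eq_sub_of_add_eq hpsi]
  have := sub_ne_zero.2 hs1
  field_simp
  ring

/-- The primitive `∫_1^x (ψ(v) - v) dv`; its Mellin transform decays fast enough along vertical
lines for absolutely convergent inversion. -/
noncomputable def psiErrorPrimitive (x : ℝ) : ℝ := ∫ v in (1 : ℝ)..x, psiError v

lemma continuous_psiErrorPrimitive : Continuous psiErrorPrimitive :=
  intervalIntegral.continuous_primitive intervalIntegrable_psiError 1

/-- The Mellin transform of `psiErrorPrimitive` on `(1, ∞)` at `-(s + 1)`, continued to the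
zero-free half-plane. Using `riemannZeta₁` instead of `riemannZeta` removes the pole at `s = 1`. -/
noncomputable def psiErrorTransform (s : ℂ) : ℂ :=
  (-logDeriv riemannZeta₁ s - 1) / (s * (s + 1))

lemma mellin_psiErrorPrimitive (hs : 1 < s.re) :
    mellin (indicator (Ioi 1) fun u ↦ (psiErrorPrimitive u : ℂ)) (-(s + 1)) =
      psiErrorTransform s := by
  have hprim := integral_primitive_mul_cpow (measurable_ofReal.comp measurable_psiError)
    (by rw [add_re, one_re]; linarith) (integrableOn_psiError_mul_cpow hs)
  simp only [Function.comp_apply, intervalIntegral.integral_ofReal] at hprim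
  rw [mellin_indicator_Ioi zero_le_one, psiErrorTransform, ← div_div,
    ← integral_psiError_mul_cpow hs, ← hprim]
  simp only [mul_comm, neg_add', psiErrorPrimitive]

lemma mellinConvergent_psiErrorPrimitive (hs : 1 < s.re) :
    MellinConvergent (indicator (Ioi 1) fun u ↦ (psiErrorPrimitive u : ℂ)) (-(s + 1)) := by
  have hint := integrableOn_primitive_mul_cpow (measurable_ofReal.comp measurable_psiError)
    (by rw [add_re, one_re]; linarith) (integrableOn_psiError_mul_cpow hs)
  simp only [Function.comp_apply, intervalIntegral.integral_ofReal] at hint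
  refine (hint.integrable_indicator measurableSet_Ioi).integrableOn.congr
    (ae_of_all _ fun u ↦ ?_)
  by_cases hu : u ∈ Ioi (1 : ℝ) <;>
    simp [hu, psiErrorPrimitive, mul_comm, sub_eq_add_neg, add_comm]

end PsiError

section VerticalLines

variable {F : ℂ → ℂ} {b c a C : ℝ}

lemma verticalIntegrable_of_norm_le (ha : 1 < a) (hF : ∀ s : ℂ, s.re = b → ContinuousAt F s)
    (hbound : ∀ s : ℂ, s.re = b → ‖F s‖ ≤ C * (1 + |s.im|) ^ (-a)) : VerticalIntegrable F b := by
  have hcont : Continuous fun t : ℝ ↦ F (b + t * I) :=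
    continuous_iff_continuousAt.2 fun t ↦
      ContinuousAt.comp (f := fun t : ℝ ↦ (b : ℂ) + t * I) (hF _ (by simp)) (by fun_prop)
  have hdom : Integrable fun t : ℝ ↦ C * (1 + ‖t‖) ^ (-a) :=
    (integrable_one_add_norm (by simpa using ha)).const_mul C
  exact hdom.mono' hcont.aestronglyMeasurable
    (ae_of_all _ fun t ↦ by simpa using hbound (b + t * I) (by simp))

lemma tendsto_integral_horizontal_zero (hbc : b ≤ c) (ha : 0 < a)
    (hbound : ∀ s : ℂ, s.re ∈ Icc b c → ‖F s‖ ≤ C * (1 + |s.im|) ^ (-a)) {ι : Type*} {l : Filter ι}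
    {T : ι → ℝ} (hT : Tendsto (fun i ↦ |T i|) l atTop) :
    Tendsto (fun i ↦ ∫ x in b..c, F (x + T i * I)) l (𝓝 0) := by
  have hpow : Tendsto (fun i ↦ C * (1 + |T i|) ^ (-a) * |c - b|) l (𝓝 0) := by
    have hneg := (tendsto_rpow_neg_atTop ha).comp (tendsto_atTop_add_const_left l 1 hT)
    simpa using (hneg.const_mul C).mul_const |c - b|
  refine squeeze_zero_norm (fun i ↦ ?_) hpow
  refine intervalIntegral.norm_integral_le_of_norm_le_const fun x hx ↦ ?_
  rw [uIoc_of_le hbc] at hx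
  simpa using hbound (x + T i * I) (by simpa using ⟨hx.1.le, hx.2⟩)

lemma integral_vertical_eq_of_norm_le (hbc : b ≤ c) (ha : 1 < a)
    (hF : ∀ s : ℂ, s.re ∈ Icc b c → DifferentiableAt ℂ F s)
    (hbound : ∀ s : ℂ, s.re ∈ Icc b c → ‖F s‖ ≤ C * (1 + |s.im|) ^ (-a)) :
    ∫ t : ℝ, F (b + t * I) = ∫ t : ℝ, F (c + t * I) := by
  have hvert (d : ℝ) (hd : d ∈ Icc b c) : Tendsto (fun T : ℝ ↦ ∫ t in (-T)..T, F (d + t * I)) atTop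
      (𝓝 (∫ t : ℝ, F (d + t * I))) :=
    intervalIntegral_tendsto_integral
      (verticalIntegrable_of_norm_le ha (fun s hs ↦ (hF s (hs ▸ hd)).continuousAt)
        fun s hs ↦ hbound s (hs ▸ hd))
      tendsto_neg_atTop_atBot tendsto_id
  have htop := tendsto_integral_horizontal_zero hbc (by linarith) hbound
    (T := fun T : ℝ ↦ T) tendsto_abs_atTop_atTop
  have hbot := tendsto_integral_horizontal_zero hbc (by linarith) hbound
    (T := fun T : ℝ ↦ -T) (by simpa using tendsto_abs_atTop_atTop)
  have hrect (T : ℝ) : (∫ x in b..c, F (x + (-T : ℝ) * I)) - (∫ x in b..c, F (x + T * I)) +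
      I * (∫ t in (-T)..T, F (c + t * I)) - I * (∫ t in (-T)..T, F (b + t * I)) = 0 := by
    simpa using integral_boundary_rect_eq_zero_of_differentiableOn F ⟨b, -T⟩ ⟨c, T⟩ fun s hs ↦
      (hF s (uIcc_of_le hbc ▸ (mem_reProdIm.1 hs).1)).differentiableWithinAt
  have hlim := ((hbot.sub htop).add ((hvert c ⟨hbc, le_rfl⟩).const_mul I)).sub
    ((hvert b ⟨le_rfl, hbc⟩).const_mul I)
  simp only [hrect, sub_zero, zero_add, ← mul_sub] at hlim
  have hzero := (mul_eq_zero.1 (tendsto_nhds_unique hlim tendsto_const_nhds)).resolve_left I_ne_zero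
  exact (sub_eq_zero.1 hzero).symm

end VerticalLines

section PowerIncrements

variable {y z : ℝ} {s : ℂ}

lemma norm_cpow_sub_cpow_le_mul_sub (hy : 0 < y) (hyz : y ≤ z) (hs : 0 ≤ s.re) :
    ‖(z : ℂ) ^ (s + 1) - (y : ℂ) ^ (s + 1)‖ ≤ ‖s + 1‖ * z ^ s.re * (z - y) := by
  have hs1 : s + 1 ≠ 0 := fun h ↦ by
    have := congrArg re h
    simp only [add_re, one_re, zero_re] at this
    linarith
  have hmvt := (convex_Icc y z).norm_image_sub_le_of_norm_hasDerivWithin_le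
    (f := fun u : ℝ ↦ (u : ℂ) ^ (s + 1)) (C := ‖s + 1‖ * z ^ s.re)
    (fun u hu ↦ (hasDerivAt_ofReal_cpow_const (hy.trans_le hu.1).ne' hs1).hasDerivWithinAt)
    (fun u hu ↦ by
      have hu0 := hy.trans_le hu.1
      rw [norm_mul, norm_cpow_eq_rpow_re_of_pos hu0, add_sub_cancel_right]
      gcongr
      exact hu.2)
    ⟨le_rfl, hyz⟩ ⟨hyz, le_rfl⟩
  rwa [Real.norm_of_nonneg (sub_nonneg.2 hyz)] at hmvt

lemma norm_cpow_sub_cpow_le_two_mul (hy : 0 < y) (hyz : y ≤ z) (hs : 0 ≤ s.re) :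
    ‖(z : ℂ) ^ (s + 1) - (y : ℂ) ^ (s + 1)‖ ≤ 2 * z ^ (s.re + 1) := by
  have htri := norm_sub_le ((z : ℂ) ^ (s + 1)) ((y : ℂ) ^ (s + 1))
  rw [norm_cpow_eq_rpow_re_of_pos (hy.trans_le hyz), norm_cpow_eq_rpow_re_of_pos hy, add_re,
    one_re] at htri
  have hmono : y ^ (s.re + 1) ≤ z ^ (s.re + 1) := Real.rpow_le_rpow hy.le hyz (by linarith)
  linarith

-- Geometric interpolation between the mean value bound and the trivial bound.
lemma norm_cpow_sub_cpow_le_rpow {κ : ℝ} (hκ : κ ∈ Icc 0 1) (hy : 0 < y) (hyz : y ≤ z)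
    (hs : 0 ≤ s.re) :
    ‖(z : ℂ) ^ (s + 1) - (y : ℂ) ^ (s + 1)‖ ≤
      2 * ‖s + 1‖ ^ κ * ((z - y) ^ κ * z ^ (s.re + 1 - κ)) := by
  set N := ‖(z : ℂ) ^ (s + 1) - (y : ℂ) ^ (s + 1)‖
  have hz : 0 < z := hy.trans_le hyz
  have hsub : 0 ≤ z - y := sub_nonneg.2 hyz
  have hκ' : 0 ≤ 1 - κ := sub_nonneg.2 hκ.2
  calc
    N = N ^ κ * N ^ (1 - κ) := by
      rw [← Real.rpow_add_of_nonneg (norm_nonneg _) hκ.1 hκ', add_sub_cancel, Real.rpow_one]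
    _ ≤ (‖s + 1‖ * z ^ s.re * (z - y)) ^ κ * (2 * z ^ (s.re + 1)) ^ (1 - κ) :=
      mul_le_mul
        (Real.rpow_le_rpow (norm_nonneg _) (norm_cpow_sub_cpow_le_mul_sub hy hyz hs) hκ.1)
        (Real.rpow_le_rpow (norm_nonneg _) (norm_cpow_sub_cpow_le_two_mul hy hyz hs) hκ')
        (by positivity) (by positivity)
    _ = 2 ^ (1 - κ) * ‖s + 1‖ ^ κ *
        ((z - y) ^ κ * ((z ^ s.re) ^ κ * (z ^ (s.re + 1)) ^ (1 - κ))) := by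
      rw [Real.mul_rpow (by positivity) hsub, Real.mul_rpow (by positivity) (by positivity),
        Real.mul_rpow (by positivity) (by positivity)]
      ring
    _ = 2 ^ (1 - κ) * ‖s + 1‖ ^ κ * ((z - y) ^ κ * z ^ (s.re + 1 - κ)) := by
      rw [← Real.rpow_mul hz.le, ← Real.rpow_mul hz.le, ← Real.rpow_add hz]
      ring_nf
    _ ≤ 2 * ‖s + 1‖ ^ κ * ((z - y) ^ κ * z ^ (s.re + 1 - κ)) := by
      gcongr
      exact Real.rpow_le_self_of_one_le one_le_two (by linarith [hκ.1])

end PowerIncrements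

section Inversion

variable {β δ : ℝ} {s : ℂ}

lemma differentiableAt_psiErrorTransform (hβ : 0 ≤ β) (hζ : ∀ s : ℂ, β < s.re → riemannZeta s ≠ 0)
    (hs : β < s.re) : DifferentiableAt ℂ psiErrorTransform s := by
  have hs0 : s ≠ 0 := fun h ↦ by
    rw [h, zero_re] at hs
    linarith
  have hs1 : s + 1 ≠ 0 := fun h ↦ by
    have := congrArg re h
    simp only [add_re, one_re, zero_re] at this
    linarith
  have hlog : DifferentiableAt ℂ (logDeriv riemannZeta₁) s :=
    differentiable_riemannZeta₁.deriv.differentiableAt.div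
      differentiable_riemannZeta₁.differentiableAt (riemannZeta₁_ne_zero hζ hs)
  exact (hlog.neg.sub_const 1).div (by fun_prop) (mul_ne_zero hs0 hs1)

lemma one_add_abs_im_le_three_mul_norm (hs : 1 / 2 ≤ s.re) : 1 + |s.im| ≤ 3 * ‖s‖ := by
  linarith [re_le_norm s, abs_im_le_norm s]

lemma norm_add_one_le_four_mul (hs : s.re ∈ Icc 0 2) : ‖s + 1‖ ≤ 4 * (1 + |s.im|) := by
  have hnorm := norm_le_abs_re_add_abs_im (s + 1)
  simp only [add_re, one_re, add_im, one_im, add_zero] at hnorm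
  rw [abs_of_nonneg (by linarith [hs.1])] at hnorm
  linarith [hs.2, abs_nonneg s.im]

lemma exists_norm_psiErrorTransform_le (hβ : 1 / 2 ≤ β)
    (hζ : ∀ s : ℂ, β < s.re → riemannZeta s ≠ 0) (hδ : 0 < δ) :
    ∃ C : ℝ, 0 < C ∧ ∀ s : ℂ, s.re ∈ Icc (β + δ) 2 →
      ‖psiErrorTransform s‖ ≤ C * (1 + |s.im|) ^ (-(2 - δ)) := by
  obtain ⟨C, hC, hlog⟩ := exists_norm_logDeriv_riemannZeta₁_le hβ hζ hδ
  refine ⟨9 * (C + 1), by positivity, fun s hs ↦ ?_⟩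
  set T := 1 + |s.im|
  have hT1 : 1 ≤ T := le_add_of_nonneg_right (abs_nonneg _)
  have hnum : ‖-logDeriv riemannZeta₁ s - 1‖ ≤ (C + 1) * T ^ δ := by
    have htri := norm_sub_le (-logDeriv riemannZeta₁ s) 1
    rw [norm_neg, norm_one] at htri
    linarith [hlog s hs.1 hs.2, Real.one_le_rpow hT1 hδ.le]
  have hden : T ^ 2 ≤ 9 * (‖s‖ * ‖s + 1‖) := by
    have h0 : T ≤ 3 * ‖s‖ := one_add_abs_im_le_three_mul_norm (by linarith [hs.1])
    have h1 : T ≤ 3 * ‖s + 1‖ := by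
      simpa using one_add_abs_im_le_three_mul_norm (s := s + 1)
        (by simp only [add_re, one_re]; linarith [hs.1])
    nlinarith [mul_le_mul h0 h1 (by linarith) (by positivity)]
  have hpow : T ^ δ = T ^ (-(2 - δ)) * T ^ 2 := by
    rw [← Real.rpow_two, ← Real.rpow_add (by linarith)]
    ring_nf
  have hpos : 0 < ‖s‖ * ‖s + 1‖ := by nlinarith
  rw [psiErrorTransform, norm_div, norm_mul, div_le_iff₀ hpos]
  calc
    _ ≤ (C + 1) * (T ^ (-(2 - δ)) * T ^ 2) := hpow ▸ hnum
    _ ≤ (C + 1) * (T ^ (-(2 - δ)) * (9 * (‖s‖ * ‖s + 1‖))) := by gcongr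
    _ = _ := by ring

lemma psiErrorPrimitive_eq_integral_two (hβ : β ∈ Ico (1 / 2) 2)
    (hζ : ∀ s : ℂ, β < s.re → riemannZeta s ≠ 0) {x : ℝ} (hx : 1 < x) :
    (psiErrorPrimitive x : ℂ) = (1 / (2 * Real.pi) : ℂ) *
      ∫ t : ℝ, psiErrorTransform ((2 : ℝ) + t * I) * (x : ℂ) ^ ((2 : ℝ) + t * I + 1) := by
  set P : ℝ → ℂ := indicator (Ioi 1) fun u ↦ (psiErrorPrimitive u : ℂ)
  have hPx : P x = psiErrorPrimitive x := indicator_of_mem (mem_Ioi.2 hx) _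
  have hmellin (t : ℝ) : mellin P (((-3 : ℝ) : ℂ) + t * I) =
      psiErrorTransform ((2 : ℝ) + (-t : ℝ) * I) := by
    rw [← mellin_psiErrorPrimitive (by simp)]
    congr 1
    push_cast
    ring
  have hconv : MellinConvergent P ((-3 : ℝ) : ℂ) := by
    convert mellinConvergent_psiErrorPrimitive (s := 2) (by simp) using 1
    push_cast
    ring
  have hvert : VerticalIntegrable (mellin P) (-3) := by
    obtain ⟨C, -, hC⟩ := exists_norm_psiErrorTransform_le hβ.1 hζ
      (δ := min (2 - β) (1 / 2)) (by simpa using hβ.2)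
    refine (verticalIntegrable_of_norm_le (b := 2) (a := 2 - min (2 - β) (1 / 2))
      (by linarith [min_le_right (2 - β) (1 / 2)])
      (fun s hs ↦ (differentiableAt_psiErrorTransform (by linarith [hβ.1]) hζ
        (by linarith [hβ.2])).continuousAt)
      fun s hs ↦ hC s ⟨by linarith [min_le_left (2 - β) (1 / 2)], hs.le⟩).comp_neg.congr
        (ae_of_all _ fun t ↦ ?_)
    exact (hmellin t).symm
  have hcont : ContinuousAt P x := by
    refine (continuous_ofReal.comp continuous_psiErrorPrimitive).continuousAt.congr ?_
    filter_upwards [lt_mem_nhds hx] with y hy using (indicator_of_mem (mem_Ioi.2 hy) _).symm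
  rw [← hPx, ← mellinInv_mellin_eq (-3) P (by linarith) hconv hvert hcont, mellinInv,
    ← integral_neg_eq_self, real_smul]
  simp only [hmellin, smul_eq_mul, neg_neg]
  congr 1
  · push_cast
    rfl
  · congr 1 with t
    rw [mul_comm]
    congr 2
    push_cast
    ring

end Inversion

section ShiftedInversion

variable {β δ : ℝ}

lemma exists_norm_psiErrorTransform_mul_cpow_le (hβ : 1 / 2 ≤ β)
    (hζ : ∀ s : ℂ, β < s.re → riemannZeta s ≠ 0) (hδ : 0 < δ) {x : ℝ} (hx : 1 ≤ x) :
    ∃ C : ℝ, ∀ s : ℂ, s.re ∈ Icc (β + δ) 2 →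
      ‖psiErrorTransform s * (x : ℂ) ^ (s + 1)‖ ≤ C * (1 + |s.im|) ^ (-(2 - δ)) := by
  obtain ⟨C, hC, hbound⟩ := exists_norm_psiErrorTransform_le hβ hζ hδ
  refine ⟨C * x ^ (3 : ℝ), fun s hs ↦ ?_⟩
  have hpow : ‖(x : ℂ) ^ (s + 1)‖ ≤ x ^ (3 : ℝ) := by
    rw [norm_cpow_eq_rpow_re_of_pos (by linarith), add_re, one_re]
    exact Real.rpow_le_rpow_of_exponent_le hx (by linarith [hs.2])
  calc
    _ ≤ C * (1 + |s.im|) ^ (-(2 - δ)) * x ^ (3 : ℝ) := by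
      rw [norm_mul]
      gcongr
      exact hbound s hs
    _ = _ := by ring

lemma differentiableAt_psiErrorTransform_mul_cpow (hβ : 0 ≤ β)
    (hζ : ∀ s : ℂ, β < s.re → riemannZeta s ≠ 0) {s : ℂ} (hs : β < s.re) {x : ℝ} (hx : x ≠ 0) :
    DifferentiableAt ℂ (fun s ↦ psiErrorTransform s * (x : ℂ) ^ (s + 1)) s :=
  (differentiableAt_psiErrorTransform hβ hζ hs).mul
    ((differentiableAt_id.add_const 1).const_cpow (.inl (ofReal_ne_zero.2 hx)))

lemma norm_mul_cpow_sub_cpow_le {w s : ℂ} {C y z : ℝ} (hs : s.re ∈ Icc 0 2)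
    (hδ : δ ∈ Icc 0 (1 / 2)) (hw : ‖w‖ ≤ C * (1 + |s.im|) ^ (-(2 - δ))) (hy : 0 < y) (hyz : y ≤ z) :
    ‖w * ((z : ℂ) ^ (s + 1) - (y : ℂ) ^ (s + 1))‖ ≤
      8 * C * ((z - y) ^ (1 - 2 * δ) * z ^ (s.re + 2 * δ)) * (1 + |s.im|) ^ (-(1 + δ)) := by
  have hκ : 1 - 2 * δ ∈ Icc 0 1 := ⟨by linarith [hδ.2], by linarith [hδ.1]⟩
  have hincr := norm_cpow_sub_cpow_le_rpow hκ hy hyz hs.1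
  rw [show s.re + 1 - (1 - 2 * δ) = s.re + 2 * δ by ring] at hincr
  set M := (z - y) ^ (1 - 2 * δ) * z ^ (s.re + 2 * δ)
  have hM : 0 ≤ M := mul_nonneg (Real.rpow_nonneg (sub_nonneg.2 hyz) _)
    (Real.rpow_nonneg (hy.le.trans hyz) _)
  set T := 1 + |s.im|
  have hT : 0 < T := by positivity
  have hfactor : ‖s + 1‖ ^ (1 - 2 * δ) ≤ 4 * T ^ (1 - 2 * δ) := calc
    ‖s + 1‖ ^ (1 - 2 * δ) ≤ (4 * T) ^ (1 - 2 * δ) :=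
      Real.rpow_le_rpow (norm_nonneg _) (norm_add_one_le_four_mul hs) hκ.1
    _ = 4 ^ (1 - 2 * δ) * T ^ (1 - 2 * δ) := Real.mul_rpow (by norm_num) hT.le
    _ ≤ 4 * T ^ (1 - 2 * δ) := by
      gcongr
      exact Real.rpow_le_self_of_one_le (by norm_num) hκ.2
  calc
    _ ≤ C * T ^ (-(2 - δ)) * (2 * (4 * T ^ (1 - 2 * δ)) * M) := by
      rw [norm_mul]
      exact mul_le_mul hw (hincr.trans (by gcongr)) (norm_nonneg _) ((norm_nonneg _).trans hw)
    _ = 8 * C * M * (T ^ (-(2 - δ)) * T ^ (1 - 2 * δ)) := by ring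
    _ = 8 * C * M * T ^ (-(1 + δ)) := by
      rw [← Real.rpow_add hT]
      ring_nf

variable (hβ : β ∈ Icc (1 / 2) 1) (hζ : ∀ s : ℂ, β < s.re → riemannZeta s ≠ 0)
include hβ hζ

lemma verticalIntegrable_psiErrorTransform_mul_cpow (hδ : δ ∈ Ioo 0 1) {x : ℝ} (hx : 1 ≤ x) :
    VerticalIntegrable (fun s ↦ psiErrorTransform s * (x : ℂ) ^ (s + 1)) (β + δ) := by
  obtain ⟨C, hC⟩ := exists_norm_psiErrorTransform_mul_cpow_le hβ.1 hζ hδ.1 hx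
  refine verticalIntegrable_of_norm_le (a := 2 - δ) (by linarith [hδ.2]) (fun s hs ↦ ?_)
    fun s hs ↦ hC s ⟨hs.ge, by linarith [hβ.2, hδ.2]⟩
  exact (differentiableAt_psiErrorTransform_mul_cpow (by linarith [hβ.1]) hζ (by linarith [hδ.1])
    (by linarith)).continuousAt

lemma psiErrorPrimitive_eq_integral (hδ : δ ∈ Ioo 0 1) {x : ℝ} (hx : 1 < x) :
    (psiErrorPrimitive x : ℂ) = (1 / (2 * Real.pi) : ℂ) *
      ∫ t : ℝ, psiErrorTransform ((β + δ : ℝ) + t * I) *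
        (x : ℂ) ^ ((β + δ : ℝ) + t * I + 1) := by
  obtain ⟨C, hC⟩ := exists_norm_psiErrorTransform_mul_cpow_le hβ.1 hζ hδ.1 hx.le
  rw [psiErrorPrimitive_eq_integral_two ⟨hβ.1, by linarith [hβ.2]⟩ hζ hx]
  congr 1
  exact (integral_vertical_eq_of_norm_le (F := fun s ↦ psiErrorTransform s * (x : ℂ) ^ (s + 1))
    (by linarith [hβ.2, hδ.2]) (by linarith [hδ.2])
    (fun s hs ↦ differentiableAt_psiErrorTransform_mul_cpow (by linarith [hβ.1]) hζ
      (by linarith [hδ.1, hs.1]) (by linarith)) hC).symm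

lemma exists_abs_psiErrorPrimitive_sub_le (hδ : δ ∈ Ioc 0 (1 / 2)) :
    ∃ C : ℝ, 0 ≤ C ∧ ∀ y z : ℝ, 1 < y → y ≤ z →
      |psiErrorPrimitive z - psiErrorPrimitive y| ≤
        C * ((z - y) ^ (1 - 2 * δ) * z ^ (β + 3 * δ)) := by
  obtain ⟨C, hC, hbound⟩ := exists_norm_psiErrorTransform_le hβ.1 hζ hδ.1
  have hint : Integrable fun t : ℝ ↦ (1 + ‖t‖) ^ (-(1 + δ)) :=
    integrable_one_add_norm (by simpa using hδ.1)
  refine ⟨1 / (2 * Real.pi) * (8 * C * ∫ t : ℝ, (1 + ‖t‖) ^ (-(1 + δ))),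
    mul_nonneg (by positivity) (mul_nonneg (by positivity) (integral_nonneg fun t ↦ by positivity)),
    fun y z hy hyz ↦ ?_⟩
  have hδ' : δ ∈ Ioo 0 1 := ⟨hδ.1, by linarith [hδ.2]⟩
  set M := (z - y) ^ (1 - 2 * δ) * z ^ (β + 3 * δ)
  have hpoint (t : ℝ) : ‖psiErrorTransform ((β + δ : ℝ) + t * I) *
        (z : ℂ) ^ ((β + δ : ℝ) + t * I + 1) - psiErrorTransform ((β + δ : ℝ) + t * I) *
        (y : ℂ) ^ ((β + δ : ℝ) + t * I + 1)‖ ≤ 8 * C * M * (1 + ‖t‖) ^ (-(1 + δ)) := by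
    have hs : ((β + δ : ℝ) + t * I : ℂ).re = β + δ := by simp
    have hsub := norm_mul_cpow_sub_cpow_le (s := (β + δ : ℝ) + t * I)
      ⟨by linarith [hβ.1, hδ.1], by linarith [hβ.2, hδ.2]⟩ ⟨hδ.1.le, hδ.2⟩
      (hbound _ ⟨hs.ge, by linarith [hβ.2, hδ.2]⟩) (zero_lt_one.trans hy) hyz
    rw [hs, show β + δ + 2 * δ = β + 3 * δ by ring, mul_sub] at hsub
    simpa using hsub
  have hnorm := norm_integral_le_of_norm_le (hint.const_mul (8 * C * M)) (ae_of_all _ hpoint)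
  rw [integral_const_mul] at hnorm
  rw [← Real.norm_eq_abs, ← norm_real, ofReal_sub,
    psiErrorPrimitive_eq_integral hβ hζ hδ' (hy.trans_le hyz),
    psiErrorPrimitive_eq_integral hβ hζ hδ' hy, ← mul_sub, ← integral_sub
      (verticalIntegrable_psiErrorTransform_mul_cpow hβ hζ hδ' (by linarith))
      (verticalIntegrable_psiErrorTransform_mul_cpow hβ hζ hδ' hy.le), norm_mul,
    show ‖(1 / (2 * Real.pi) : ℂ)‖ = 1 / (2 * Real.pi) by
      simp [abs_of_pos Real.pi_pos]]
  calc
    _ ≤ 1 / (2 * Real.pi) * (8 * C * M * ∫ t : ℝ, (1 + ‖t‖) ^ (-(1 + δ))) := by gcongr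
    _ = _ := by ring

end ShiftedInversion

section PrimeNumberTheorem

open Chebyshev

variable {β δ : ℝ}

lemma mul_psi_sub_le_psiErrorPrimitive_sub {x h : ℝ} (hh : 0 ≤ h) :
    h * (psi x - (x + h)) ≤ psiErrorPrimitive (x + h) - psiErrorPrimitive x := by
  have hmono := intervalIntegral.integral_mono_on (le_add_of_nonneg_right hh)
    intervalIntegrable_const (intervalIntegrable_psiError x (x + h))
    fun v hv ↦ sub_le_sub (psi_mono hv.1) hv.2
  rwa [intervalIntegral.integral_const, add_sub_cancel_left, smul_eq_mul,
    ← intervalIntegral.integral_interval_sub_left (intervalIntegrable_psiError 1 _)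
      (intervalIntegrable_psiError 1 _)] at hmono

lemma psiErrorPrimitive_sub_le_mul_psi_sub {x h : ℝ} (hh : 0 ≤ h) :
    psiErrorPrimitive x - psiErrorPrimitive (x - h) ≤ h * (psi x - (x - h)) := by
  have hmono := intervalIntegral.integral_mono_on (sub_le_self x hh)
    (intervalIntegrable_psiError (x - h) x) intervalIntegrable_const
    fun v hv ↦ sub_le_sub (psi_mono hv.2) hv.1
  rwa [intervalIntegral.integral_const, sub_sub_cancel, smul_eq_mul,
    ← intervalIntegral.integral_interval_sub_left (intervalIntegrable_psiError 1 _)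
      (intervalIntegrable_psiError 1 _)] at hmono

lemma rpow_one_sub_mul_rpow_le {h x z γ : ℝ} (hh : 1 ≤ h) (hδ : 0 ≤ δ) (hx : 0 ≤ x) (hz : 0 ≤ z)
    (hzx : z ≤ 2 * x) (hγ : γ ∈ Icc 0 3) : h ^ (1 - 2 * δ) * z ^ γ ≤ h * (8 * x ^ γ) := by
  have hpow : h ^ (1 - 2 * δ) ≤ h := Real.rpow_le_self_of_one_le hh (by linarith)
  have htwo : (2 : ℝ) ^ γ ≤ 8 := by
    have := Real.rpow_le_rpow_of_exponent_le one_le_two hγ.2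
    norm_num at this
    exact this
  calc
    h ^ (1 - 2 * δ) * z ^ γ ≤ h * (2 * x) ^ γ := by
      gcongr
      exact hγ.1
    _ = h * (2 ^ γ * x ^ γ) := by rw [Real.mul_rpow zero_le_two hx]
    _ ≤ h * (8 * x ^ γ) := by gcongr

lemma abs_psi_sub_le_of_abs_psiErrorPrimitive_sub_le {x h E : ℝ} (hh : 0 < h)
    (hright : |psiErrorPrimitive (x + h) - psiErrorPrimitive x| ≤ h * E)
    (hleft : |psiErrorPrimitive x - psiErrorPrimitive (x - h)| ≤ h * E) : |psi x - x| ≤ E + h := by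
  have hupper : psi x - (x + h) ≤ E := le_of_mul_le_mul_left
    ((mul_psi_sub_le_psiErrorPrimitive_sub hh.le).trans (le_of_abs_le hright)) hh
  have hlower : -E ≤ psi x - (x - h) := le_of_mul_le_mul_left
    ((mul_neg h E).trans_le ((neg_le_of_abs_le hleft).trans
      (psiErrorPrimitive_sub_le_mul_psi_sub hh.le))) hh
  rw [abs_le]
  constructor <;> linarith

lemma rpow_div_two_mem_Icc {x : ℝ} (hβ : β ∈ Icc (1 / 2) 1) (hx : 4 ≤ x) :
    x ^ β / 2 ∈ Icc 1 (x / 2) := by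
  have hone : 1 ≤ x := by linarith
  have htwo : 2 ≤ x ^ (1 / 2 : ℝ) := by
    rw [← Real.sqrt_eq_rpow]
    exact Real.le_sqrt_of_sq_le (by linarith)
  constructor
  · linarith [Real.rpow_le_rpow_of_exponent_le hone hβ.1]
  · linarith [Real.rpow_le_self_of_one_le hone hβ.2]

lemma exists_abs_psi_sub_le (hβ : β ∈ Icc (1 / 2) 1)
    (hζ : ∀ s : ℂ, β < s.re → riemannZeta s ≠ 0) (hδ : δ ∈ Ioc 0 (1 / 2)) :
    ∃ C : ℝ, 0 ≤ C ∧ ∀ x : ℝ, 1 ≤ x → |psi x - x| ≤ C * x ^ (β + 3 * δ) := by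
  obtain ⟨C, hC, hP⟩ := exists_abs_psiErrorPrimitive_sub_le hβ hζ hδ
  have hγ : β + 3 * δ ∈ Icc 0 3 := ⟨by linarith [hβ.1, hδ.1], by linarith [hβ.2, hδ.2]⟩
  refine ⟨8 * C + 28, by positivity, fun x hx ↦ ?_⟩
  have hpow : 1 ≤ x ^ (β + 3 * δ) := Real.one_le_rpow hx hγ.1
  rcases lt_or_ge x 4 with hx4 | hx4
  · have htriv : |psi x - x| ≤ 7 * x := abs_psiError_le (by linarith)
    nlinarith
  set h := x ^ β / 2 with h_def
  have hh : h ∈ Icc 1 (x / 2) := rpow_div_two_mem_Icc hβ hx4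
  have hhpow : h ≤ x ^ (β + 3 * δ) := by
    have := Real.rpow_le_rpow_of_exponent_le hx (by linarith [hδ.1] : β ≤ β + 3 * δ)
    linarith [hh.1]
  have hstep {y z : ℝ} (hy : 1 < y) (hyz : z - y = h) (hzx : z ≤ 2 * x) :
      |psiErrorPrimitive z - psiErrorPrimitive y| ≤ h * (8 * C * x ^ (β + 3 * δ)) := calc
    _ ≤ C * ((z - y) ^ (1 - 2 * δ) * z ^ (β + 3 * δ)) := hP y z hy (by linarith [hh.1])
    _ ≤ C * (h * (8 * x ^ (β + 3 * δ))) := by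
      rw [hyz]
      gcongr C * ?_
      exact rpow_one_sub_mul_rpow_le hh.1 hδ.1.le (by linarith) (by linarith [hh.1]) hzx hγ
    _ = _ := by ring
  have hsub := abs_psi_sub_le_of_abs_psiErrorPrimitive_sub_le (x := x) (by linarith [hh.1])
    (hstep (by linarith) (by ring) (by linarith [hh.2]))
    (hstep (by linarith [hh.2]) (by ring) (by linarith))
  nlinarith

lemma exists_abs_theta_sub_le {κ : ℝ} (hβκ : β < κ) (hκ : κ ∈ Ioc (1 / 2) 1)
    (hζ : ∀ s : ℂ, β < s.re → riemannZeta s ≠ 0) :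
    ∃ K : ℝ, 1 ≤ K ∧ ∀ x : ℝ, 1 ≤ x → |theta x - x| ≤ K * x ^ κ := by
  have hmax : max β (1 / 2) < κ := max_lt hβκ hκ.1
  have hhalf : 1 / 2 ≤ max β (1 / 2) := le_max_right _ _
  obtain ⟨C, hC, hpsi⟩ := exists_abs_psi_sub_le (δ := (κ - max β (1 / 2)) / 3)
    ⟨hhalf, hmax.le.trans hκ.2⟩ (fun s hs ↦ hζ s ((le_max_left _ _).trans_lt hs))
    ⟨by linarith, by linarith [hκ.2]⟩
  rw [show max β (1 / 2) + 3 * ((κ - max β (1 / 2)) / 3) = κ by ring] at hpsi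
  obtain ⟨D, hD⟩ := psi_sub_theta_le_mul_sqrt
  refine ⟨C + |D| + 1, by linarith [abs_nonneg D], fun x hx ↦ ?_⟩
  have hsqrt : √x ≤ x ^ κ := by
    rw [Real.sqrt_eq_rpow]
    exact Real.rpow_le_rpow_of_exponent_le hx hκ.1.le
  have hdiff : |theta x - psi x| ≤ |D| * x ^ κ := by
    rw [abs_sub_comm, abs_of_nonneg (sub_nonneg.2 (theta_le_psi x))]
    calc
      _ ≤ |D| * √x := (hD x).trans (by gcongr; exact le_abs_self D)
      _ ≤ |D| * x ^ κ := by gcongr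
  calc
    |theta x - x| ≤ |theta x - psi x| + |psi x - x| := abs_sub_le _ _ _
    _ ≤ |D| * x ^ κ + C * x ^ κ := add_le_add hdiff (hpsi x hx)
    _ ≤ (C + |D| + 1) * x ^ κ := by nlinarith [Real.one_le_rpow hx (by linarith [hκ.1] : 0 ≤ κ)]

end PrimeNumberTheorem

section PrimePairs

open Chebyshev

variable {A B x : ℝ}

/-- The primes in the real interval `(a, b]`, as a finset of naturals. -/
noncomputable def primesIoc (a b : ℝ) : Finset ℕ := {p ∈ Finset.Ioc ⌊a⌋₊ ⌊b⌋₊ | p.Prime}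

lemma mem_primesIoc {a b : ℝ} (ha : 0 ≤ a) {p : ℕ} :
    p ∈ primesIoc a b ↔ p.Prime ∧ a < p ∧ p ≤ b := by
  have hfloor (hp : p.Prime) : p ≤ ⌊b⌋₊ ↔ (p : ℝ) ≤ b := Nat.le_floor_iff' hp.ne_zero
  rw [primesIoc, Finset.mem_filter, Finset.mem_Ioc, Nat.floor_lt ha]
  grind

lemma theta_sub_theta_eq_sum_primesIoc {a b : ℝ} (hab : a ≤ b) :
    θ b - θ a = ∑ p ∈ primesIoc a b, Real.log p := by
  simp only [theta, primesIoc, Finset.sum_filter, sub_eq_iff_eq_add']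
  exact (Finset.sum_Ioc_consecutive _ (Nat.zero_le _) (Nat.floor_mono hab)).symm

/-- The ordered pairs of primes in `(A, B]` with product at most `x`. -/
noncomputable def primePairs (A B x : ℝ) : Finset (ℕ × ℕ) :=
  {pq ∈ primesIoc A B ×ˢ primesIoc A B | (pq.1 : ℝ) * pq.2 ≤ x}

lemma mem_primePairs (hA : 0 ≤ A) {pq : ℕ × ℕ} :
    pq ∈ primePairs A B x ↔ (pq.1.Prime ∧ A < pq.1 ∧ pq.1 ≤ B) ∧
      (pq.2.Prime ∧ A < pq.2 ∧ pq.2 ≤ B) ∧ (pq.1 : ℝ) * pq.2 ≤ x := by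
  rw [primePairs, Finset.mem_filter, Finset.mem_product, mem_primesIoc hA, mem_primesIoc hA,
    and_assoc]

/-- The number of `primePairs`, each pair weighted by `log p * log q`. -/
noncomputable def primePairsWeight (A B x : ℝ) : ℝ :=
  ∑ pq ∈ primePairs A B x, Real.log pq.1 * Real.log pq.2

lemma log_mem_Icc_of_mem_primePairs (hA : 0 < A) {pq : ℕ × ℕ} (hpq : pq ∈ primePairs A B x) :
    Real.log pq.1 ∈ Icc (Real.log A) (Real.log B) ∧
      Real.log pq.2 ∈ Icc (Real.log A) (Real.log B) := by
  obtain ⟨⟨-, hAp, hpB⟩, ⟨-, hAq, hqB⟩, -⟩ := (mem_primePairs hA.le).1 hpq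
  exact ⟨⟨Real.log_le_log hA hAp.le, Real.log_le_log (hA.trans hAp) hpB⟩,
    ⟨Real.log_le_log hA hAq.le, Real.log_le_log (hA.trans hAq) hqB⟩⟩

lemma sq_log_le_of_mem_primePairs (hA : 1 ≤ A) {pq : ℕ × ℕ} (hpq : pq ∈ primePairs A B x) :
    Real.log A ^ 2 ≤ Real.log pq.1 * Real.log pq.2 := by
  obtain ⟨hp, hq⟩ := log_mem_Icc_of_mem_primePairs (zero_lt_one.trans_le hA) hpq
  have hlogA : 0 ≤ Real.log A := Real.log_nonneg hA
  rw [sq]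
  exact mul_le_mul hp.1 hq.1 hlogA (hlogA.trans hp.1)

lemma le_sq_log_of_mem_primePairs (hA : 1 ≤ A) {pq : ℕ × ℕ} (hpq : pq ∈ primePairs A B x) :
    Real.log pq.1 * Real.log pq.2 ≤ Real.log B ^ 2 := by
  obtain ⟨hp, hq⟩ := log_mem_Icc_of_mem_primePairs (zero_lt_one.trans_le hA) hpq
  have hlogA : 0 ≤ Real.log A := Real.log_nonneg hA
  rw [sq]
  exact mul_le_mul hp.2 hq.2 (hlogA.trans hq.1) (hlogA.trans (hp.1.trans hp.2))

lemma sum_sub_sq_log_eq (L : ℝ) :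
    ∑ pq ∈ primePairs A B x, (Real.log pq.1 * Real.log pq.2 - L ^ 2) =
      primePairsWeight A B x - (primePairs A B x).card * L ^ 2 := by
  rw [Finset.sum_sub_distrib, Finset.sum_const, nsmul_eq_mul, primePairsWeight]

lemma card_mul_sq_log_le_primePairsWeight (hA : 1 ≤ A) :
    (primePairs A B x).card * Real.log A ^ 2 ≤ primePairsWeight A B x := by
  rw [← sub_nonneg, ← sum_sub_sq_log_eq]
  exact Finset.sum_nonneg fun pq hpq ↦ sub_nonneg.2 (sq_log_le_of_mem_primePairs hA hpq)

lemma primePairsWeight_le_card_mul_sq_log (hA : 1 ≤ A) :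
    primePairsWeight A B x ≤ (primePairs A B x).card * Real.log B ^ 2 := by
  rw [← sub_nonpos, ← sum_sub_sq_log_eq]
  exact Finset.sum_nonpos fun pq hpq ↦ sub_nonpos.2 (le_sq_log_of_mem_primePairs hA hpq)

end PrimePairs

section RectangleGain

open Chebyshev

variable {A B X K κ δ : ℝ}

lemma primesIoc_product_subset_primePairs {a b c d : ℝ} (hA : 0 ≤ A) (hXB : X ≤ B)
    (ha : A ≤ a) (hb : b ≤ X) (hc : A ≤ c) (hd : d ≤ X) :
    primesIoc a b ×ˢ primesIoc c d ⊆ primePairs A B (X ^ 2) := by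
  intro pq hpq
  rw [Finset.mem_product, mem_primesIoc (hA.trans ha), mem_primesIoc (hA.trans hc)] at hpq
  obtain ⟨⟨hp, hap, hpb⟩, hq, hcq, hqd⟩ := hpq
  refine (mem_primePairs hA).2 ⟨⟨hp, by linarith, by linarith⟩, ⟨hq, by linarith, by linarith⟩, ?_⟩
  calc
    (pq.1 : ℝ) * pq.2 ≤ X * X :=
      mul_le_mul (by linarith) (by linarith) (by positivity) (by linarith)
    _ = X ^ 2 := (sq X).symm

lemma mul_theta_sub_mul_theta_sub_le_sum {a b c d η : ℝ} {S : Finset (ℕ × ℕ)} {f : ℕ × ℕ → ℝ}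
    (hab : a ≤ b) (hcd : c ≤ d) (hS : primesIoc a b ×ˢ primesIoc c d ⊆ S)
    (hf : ∀ pq ∈ S, 0 ≤ f pq)
    (hrect : ∀ p ∈ primesIoc a b, ∀ q ∈ primesIoc c d,
      η * (Real.log p * Real.log q) ≤ f (p, q)) :
    η * ((θ b - θ a) * (θ d - θ c)) ≤ ∑ pq ∈ S, f pq := calc
  _ = ∑ pq ∈ primesIoc a b ×ˢ primesIoc c d, η * (Real.log pq.1 * Real.log pq.2) := by
    rw [theta_sub_theta_eq_sum_primesIoc hab, theta_sub_theta_eq_sum_primesIoc hcd,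
      Finset.sum_mul_sum, ← Finset.sum_product', Finset.mul_sum]
  _ ≤ ∑ pq ∈ primesIoc a b ×ˢ primesIoc c d, f pq :=
    Finset.sum_le_sum fun pq hpq ↦
      hrect _ (Finset.mem_product.1 hpq).1 _ (Finset.mem_product.1 hpq).2
  _ ≤ ∑ pq ∈ S, f pq := Finset.sum_le_sum_of_subset_of_nonneg hS fun pq hpq _ ↦ hf pq hpq

lemma log_add_le_log_of_mul_le_sub {a b : ℝ} (ha : 0 < a) (hab : a ≤ b) (hδ : 0 ≤ δ) (hbX : b ≤ X)
    (hgap : δ * X ≤ b - a) : Real.log a + δ ≤ Real.log b := by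
  have hb : 0 < b := ha.trans_le hab
  have hlog := Real.one_sub_inv_le_log_of_pos (div_pos hb ha)
  rw [inv_div, Real.log_div hb.ne' ha.ne'] at hlog
  have hfrac : a / b ≤ 1 - δ := by
    rw [div_le_iff₀ hb]
    nlinarith
  linarith

lemma half_mul_le_theta_sub_theta {a b : ℝ} (hK : 0 ≤ K) (hκ : 0 ≤ κ)
    (hθ : ∀ t : ℝ, 1 ≤ t → |θ t - t| ≤ K * t ^ κ) (ha : 1 ≤ a) (hab : a ≤ b) (hbX : b ≤ X)
    (hcond : 4 * K ≤ δ * X ^ (1 - κ)) (hgap : δ * X ≤ b - a) : δ * X / 2 ≤ θ b - θ a := by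
  have hX : 0 < X := by linarith
  have hpow {t : ℝ} (ht : 1 ≤ t) (htX : t ≤ X) : K * t ^ κ ≤ δ * X / 4 := by
    have hsplit : X ^ (1 - κ) * X ^ κ = X := by
      rw [← Real.rpow_add hX, sub_add_cancel, Real.rpow_one]
    have hmono : K * t ^ κ ≤ K * X ^ κ := by gcongr
    have := mul_le_mul_of_nonneg_right hcond (Real.rpow_nonneg hX.le κ)
    rw [mul_assoc δ, hsplit] at this
    linarith
  have hθa := (abs_le.1 (hθ a ha)).2
  have hθb := (abs_le.1 (hθ b (ha.trans hab))).1
  linarith [hpow ha (hab.trans hbX), hpow (ha.trans hab) hbX]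

lemma div_two_mul_mul_le_mul_sub_sq {a P Q : ℝ} (ha : 1 ≤ a) (hδ : δ ∈ Icc 0 1) (hP : a + δ ≤ P)
    (hQ : a ≤ Q) : δ / (2 * a) * (P * Q) ≤ P * Q - a ^ 2 := by
  have hPa : δ / (2 * a) * P ≤ P - a := by
    rw [div_mul_eq_mul_div, div_le_iff₀ (by linarith)]
    nlinarith [hδ.1, hδ.2]
  nlinarith [mul_le_mul_of_nonneg_right hPa (by linarith : 0 ≤ Q), hδ.1]

lemma div_two_mul_mul_le_sq_sub_mul {b P Q : ℝ} (hδ : 0 ≤ δ) (hP : P + δ ≤ b)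
    (hP0 : 0 ≤ P) (hQ : Q ∈ Icc 0 b) (hb : 0 < b) : δ / (2 * b) * (P * Q) ≤ b ^ 2 - P * Q := by
  have hPb : δ / (2 * b) * P ≤ b - P := by
    rw [div_mul_eq_mul_div, div_le_iff₀ (by linarith)]
    nlinarith
  nlinarith [mul_le_mul_of_nonneg_right hPb hQ.1, hQ.2]

lemma one_le_log (hA : Real.exp 1 ≤ A) : 1 ≤ Real.log A :=
  (Real.le_log_iff_exp_le ((Real.exp_pos 1).trans_le hA)).2 hA

variable (hK : 0 ≤ K) (hκ : 0 ≤ κ) (hθ : ∀ t : ℝ, 1 ≤ t → |θ t - t| ≤ K * t ^ κ)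
  (hX : 0 < X) (hXB : X ≤ B) (hδ : 0 < δ) (hAX : A ≤ (1 - 2 * δ) * X)
  (hcond : 4 * K ≤ δ * X ^ (1 - κ))
include hK hκ hθ hX hXB hδ hAX hcond

-- Primes `p` above the midpoint of `(A, X]` satisfy `log p ≥ log A + δ`.
lemma rectangle_gain_le_primePairsWeight_sub (hA : Real.exp 1 ≤ A) :
    δ ^ 3 * X ^ 2 / (8 * Real.log A) ≤
      primePairsWeight A B (X ^ 2) - (primePairs A B (X ^ 2)).card * Real.log A ^ 2 := by
  have hA1 : 1 ≤ A := (Real.one_le_exp zero_le_one).trans hA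
  have hlogA := one_le_log hA
  set D := (A + X) / 2 with hD
  have hAD : δ * X ≤ D - A := by linarith
  have hDX : δ * X ≤ X - D := by linarith
  have hgap : 0 < δ * X := mul_pos hδ hX
  have hδ1 : δ ≤ 1 := by nlinarith
  have hθDX := half_mul_le_theta_sub_theta hK hκ hθ (by linarith) (by linarith) le_rfl hcond hDX
  have hθAX := half_mul_le_theta_sub_theta hK hκ hθ hA1 (by linarith) le_rfl hcond
    (by linarith : δ * X ≤ X - A)
  have hsum := mul_theta_sub_mul_theta_sub_le_sum (η := δ / (2 * Real.log A))
    (f := fun pq ↦ Real.log pq.1 * Real.log pq.2 - Real.log A ^ 2)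
    (by linarith : D ≤ X) (by linarith : A ≤ X)
    (primesIoc_product_subset_primePairs (by linarith) hXB (by linarith) le_rfl le_rfl le_rfl)
    (fun pq hpq ↦ sub_nonneg.2 (sq_log_le_of_mem_primePairs hA1 hpq))
    fun p hp q hq ↦ by
      obtain ⟨-, hDp, -⟩ := (mem_primesIoc (by linarith)).1 hp
      obtain ⟨-, hAq, -⟩ := (mem_primesIoc (by linarith)).1 hq
      have hlogD := log_add_le_log_of_mul_le_sub (by linarith) (by linarith) hδ.le
        (by linarith : D ≤ X) hAD
      exact div_two_mul_mul_le_mul_sub_sq hlogA ⟨hδ.le, hδ1⟩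
        (hlogD.trans (Real.log_le_log (by linarith) hDp.le))
        (Real.log_le_log (by linarith) hAq.le)
  rw [sum_sub_sq_log_eq] at hsum
  calc
    _ = δ / (2 * Real.log A) * (δ * X / 2 * (δ * X / 2)) := by ring
    _ ≤ δ / (2 * Real.log A) * ((θ X - θ D) * (θ X - θ A)) := by gcongr; linarith
    _ ≤ _ := hsum

-- Primes `p` below the midpoint of `(A, X]` satisfy `log p ≤ log B - δ`.
lemma rectangle_gain_le_sub_primePairsWeight (hA : 1 ≤ A) :
    δ ^ 3 * X ^ 2 / (8 * Real.log B) ≤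
      (primePairs A B (X ^ 2)).card * Real.log B ^ 2 - primePairsWeight A B (X ^ 2) := by
  set D := (A + X) / 2 with hD
  have hAD : δ * X ≤ D - A := by linarith
  have hgap : 0 < δ * X := mul_pos hδ hX
  have hlogB : 0 < Real.log B := Real.log_pos (by linarith)
  have hθAD := half_mul_le_theta_sub_theta hK hκ hθ hA (by linarith) (by linarith) hcond hAD
  have hθAX := half_mul_le_theta_sub_theta hK hκ hθ hA (by linarith) le_rfl hcond
    (by linarith : δ * X ≤ X - A)
  have hsum := mul_theta_sub_mul_theta_sub_le_sum (η := δ / (2 * Real.log B))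
    (f := fun pq ↦ -(Real.log pq.1 * Real.log pq.2 - Real.log B ^ 2))
    (by linarith : A ≤ D) (by linarith : A ≤ X)
    (primesIoc_product_subset_primePairs (by linarith) hXB le_rfl (by linarith) le_rfl le_rfl)
    (fun pq hpq ↦ neg_nonneg.2 (sub_nonpos.2 (le_sq_log_of_mem_primePairs hA hpq)))
    fun p hp q hq ↦ by
      obtain ⟨-, hAp, hpD⟩ := (mem_primesIoc (by linarith)).1 hp
      obtain ⟨-, hAq, hqX⟩ := (mem_primesIoc (by linarith)).1 hq
      have hlogp : Real.log p + δ ≤ Real.log X := log_add_le_log_of_mul_le_sub (by linarith)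
        (by linarith) hδ.le le_rfl (by linarith)
      have hlogX : Real.log X ≤ Real.log B := Real.log_le_log hX hXB
      rw [neg_sub]
      exact div_two_mul_mul_le_sq_sub_mul hδ.le (hlogp.trans hlogX) (Real.log_nonneg (by linarith))
        ⟨Real.log_nonneg (by linarith), Real.log_le_log (by linarith) (hqX.trans hXB)⟩ hlogB
  rw [Finset.sum_neg_distrib, sum_sub_sq_log_eq, neg_sub] at hsum
  calc
    _ = δ / (2 * Real.log B) * (δ * X / 2 * (δ * X / 2)) := by ring
    _ ≤ δ / (2 * Real.log B) * ((θ D - θ A) * (θ X - θ A)) := by gcongr; linarith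
    _ ≤ _ := hsum

end RectangleGain

section HyperbolicRegion

open Chebyshev

variable {A B x u v : ℝ}

/-- The upper end of the vertical section at abscissa `v` of the region
`{(u, v) | u ≤ B, u * v ≤ x}`. -/
noncomputable def hyperbolaCap (B x v : ℝ) : ℝ := min B (x / v)

lemma hyperbolaCap_le_left : hyperbolaCap B x v ≤ B := min_le_left _ _

lemma hyperbolaCap_le_div : hyperbolaCap B x v ≤ x / v := min_le_right _ _

lemma antitoneOn_hyperbolaCap (hx : 0 ≤ x) : AntitoneOn (hyperbolaCap B x) (Ioi 0) := by
  intro u (hu : 0 < u) v _ huv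
  exact min_le_min_left B (by gcongr)

lemma le_hyperbolaCap_iff (hv : 0 < v) (hu : u ≤ B) : u ≤ hyperbolaCap B x v ↔ u * v ≤ x := by
  rw [hyperbolaCap, le_min_iff, le_div_iff₀ hv, and_iff_right hu]

/-- The area of the region `{(u, v) | A < u ≤ B, A < v ≤ B, u * v ≤ x}`, for `A * B ≤ x`. -/
noncomputable def hyperbolaArea (A B x : ℝ) : ℝ := ∫ v in A..B, (hyperbolaCap B x v - A)

variable (hA : 0 < A) (hAB : A ≤ B)
include hA hAB

lemma intervalIntegrable_comp_hyperbolaCap {f : ℝ → ℝ} (hf : MonotoneOn f (Ici 0)) (hx : 0 ≤ x) :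
    IntervalIntegrable (fun v ↦ f (hyperbolaCap B x v)) volume A B := by
  refine AntitoneOn.intervalIntegrable fun u hu v hv huv ↦ ?_
  rw [uIcc_of_le hAB] at hu hv
  have hu0 : 0 < u := hA.trans_le hu.1
  have hcap {w : ℝ} (hw : 0 < w) : hyperbolaCap B x w ∈ Ici 0 :=
    le_min (hA.le.trans hAB) (div_nonneg hx hw.le)
  exact hf (hcap (hu0.trans_le huv)) (hcap hu0)
    (antitoneOn_hyperbolaCap hx hu0 (hu0.trans_le huv) huv)

lemma intervalIntegrable_hyperbolaCap (hx : 0 ≤ x) :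
    IntervalIntegrable (hyperbolaCap B x) volume A B :=
  intervalIntegrable_comp_hyperbolaCap hA hAB monotoneOn_id hx

lemma intervalIntegrable_theta_hyperbolaCap (hx : 0 ≤ x) :
    IntervalIntegrable (fun v ↦ θ (hyperbolaCap B x v)) volume A B :=
  intervalIntegrable_comp_hyperbolaCap hA hAB (theta_mono.monotoneOn _) hx

lemma intervalIntegrable_hyperbolaCap_rpow {κ : ℝ} (hκ : 0 ≤ κ) (hx : 0 ≤ x) :
    IntervalIntegrable (fun v ↦ hyperbolaCap B x v ^ κ) volume A B :=
  intervalIntegrable_comp_hyperbolaCap hA hAB (Real.monotoneOn_rpow_Ici_of_exponent_nonneg hκ) hx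

lemma integral_hyperbolaCap (hABx : A * B ≤ x) (hx : x ≤ B ^ 2) :
    ∫ v in A..B, hyperbolaCap B x v = x - A * B + x * Real.log (B ^ 2 / x) := by
  have hB : 0 < B := hA.trans_le hAB
  have hx0 : 0 < x := (mul_pos hA hB).trans_le hABx
  have hAxB : A ≤ x / B := (le_div_iff₀ hB).2 hABx
  have hxBB : x / B ≤ B := by rwa [div_le_iff₀ hB, ← sq]
  have hxB0 : 0 < x / B := div_pos hx0 hB
  have hflat : ∫ v in A..x / B, hyperbolaCap B x v = ∫ _ in A..x / B, B :=
    intervalIntegral.integral_congr fun v hv ↦ by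
      rw [uIcc_of_le hAxB] at hv
      exact min_eq_left ((le_div_comm₀ hB (hA.trans_le hv.1)).2 hv.2)
  have hcurved : ∫ v in x / B..B, hyperbolaCap B x v = ∫ v in x / B..B, x * v⁻¹ :=
    intervalIntegral.integral_congr fun v hv ↦ by
      rw [uIcc_of_le hxBB] at hv
      rw [← div_eq_mul_inv]
      exact min_eq_right ((div_le_comm₀ (hxB0.trans_le hv.1) hB).2 hv.1)
  rw [← intervalIntegral.integral_add_adjacent_intervals
      (intervalIntegrable_hyperbolaCap hA hAB hx0.le |>.mono_set (by
        rw [uIcc_of_le hAxB, uIcc_of_le hAB]; exact Icc_subset_Icc_right hxBB))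
      (intervalIntegrable_hyperbolaCap hA hAB hx0.le |>.mono_set (by
        rw [uIcc_of_le hxBB, uIcc_of_le hAB]; exact Icc_subset_Icc_left hAxB)),
    hflat, hcurved, intervalIntegral.integral_const, intervalIntegral.integral_const_mul,
    integral_inv_of_pos hxB0 hB, smul_eq_mul, sub_mul, div_mul_cancel₀ _ hB.ne', div_div_eq_mul_div,
    sq]

lemma hyperbolaArea_eq (hABx : A * B ≤ x) (hx : x ≤ B ^ 2) :
    hyperbolaArea A B x = x - 2 * (A * B) + A ^ 2 + x * Real.log (B ^ 2 / x) := by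
  have hx0 : 0 ≤ x := (mul_pos hA (hA.trans_le hAB)).le.trans hABx
  rw [hyperbolaArea, intervalIntegral.integral_sub (intervalIntegrable_hyperbolaCap hA hAB hx0)
    intervalIntegrable_const, integral_hyperbolaCap hA hAB hABx hx, intervalIntegral.integral_const,
    smul_eq_mul]
  ring

variable (hABx : A * B ≤ x)
include hABx

lemma le_hyperbolaCap (hv : v ∈ Icc A B) : A ≤ hyperbolaCap B x v :=
  (le_hyperbolaCap_iff (hA.trans_le hv.1) hAB).2
    ((mul_le_mul_of_nonneg_left hv.2 hA.le).trans hABx)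

lemma theta_hyperbolaCap_sub_theta (hv : v ∈ Icc A B) :
    θ (hyperbolaCap B x v) - θ A =
      ∑ p ∈ primesIoc A B, if (p : ℝ) * v ≤ x then Real.log p else 0 := by
  rw [theta_sub_theta_eq_sum_primesIoc (le_hyperbolaCap hA hAB hABx hv), ← Finset.sum_filter]
  congr 1
  ext p
  rw [Finset.mem_filter, mem_primesIoc hA.le, mem_primesIoc hA.le]
  constructor
  · rintro ⟨hp, hAp, hpcap⟩
    have hpB := hpcap.trans hyperbolaCap_le_left
    exact ⟨⟨hp, hAp, hpB⟩, (le_hyperbolaCap_iff (hA.trans_le hv.1) hpB).1 hpcap⟩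
  · rintro ⟨⟨hp, hAp, hpB⟩, hpv⟩
    exact ⟨hp, hAp, (le_hyperbolaCap_iff (hA.trans_le hv.1) hpB).2 hpv⟩

lemma primePairsWeight_eq_sum : primePairsWeight A B x =
    ∑ p ∈ primesIoc A B, Real.log p * (θ (hyperbolaCap B x p) - θ A) := by
  rw [primePairsWeight, primePairs, Finset.sum_filter, Finset.sum_product]
  refine Finset.sum_congr rfl fun p hp ↦ ?_
  obtain ⟨-, hAp, hpB⟩ := (mem_primesIoc hA.le).1 hp
  rw [theta_hyperbolaCap_sub_theta hA hAB hABx ⟨hAp.le, hpB⟩, Finset.mul_sum]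
  exact Finset.sum_congr rfl fun q _ ↦ by rw [mul_ite, mul_zero, mul_comm (q : ℝ)]

-- Both sides are the integral of `g v * log p` over the pairs with `p * v ≤ x`.
lemma sum_log_mul_integral_eq_integral_mul_theta {g : ℝ → ℝ}
    (hg : IntervalIntegrable g volume A B) :
    ∑ p ∈ primesIoc A B, Real.log p * ∫ v in A..hyperbolaCap B x p, g v =
      ∫ v in A..B, g v * (θ (hyperbolaCap B x v) - θ A) := by
  have hmem {p : ℕ} (hp : p ∈ primesIoc A B) : (p : ℝ) ∈ Icc A B :=
    have := (mem_primesIoc hA.le).1 hp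
    ⟨this.2.1.le, this.2.2⟩
  have hfiber (v : ℝ) (hv : v ∈ Ioc A B) : g v * (θ (hyperbolaCap B x v) - θ A) =
      ∑ p ∈ primesIoc A B, Real.log p * (Iic (hyperbolaCap B x p)).indicator g v := by
    rw [theta_hyperbolaCap_sub_theta hA hAB hABx ⟨hv.1.le, hv.2⟩, Finset.mul_sum]
    refine Finset.sum_congr rfl fun p hp ↦ ?_
    have hiff : v ∈ Iic (hyperbolaCap B x p) ↔ (p : ℝ) * v ≤ x := by
      rw [mem_Iic, le_hyperbolaCap_iff (hA.trans_le (hmem hp).1) hv.2, mul_comm]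
    rw [indicator_apply, if_congr hiff rfl rfl, mul_ite, mul_ite, mul_zero, mul_zero,
      mul_comm (g v)]
  rw [intervalIntegrable_iff_integrableOn_Ioc_of_le hAB] at hg
  rw [intervalIntegral.integral_of_le hAB, setIntegral_congr_fun measurableSet_Ioc hfiber,
    integral_finsetSum _ fun p _ ↦ (hg.indicator measurableSet_Iic).const_mul _]
  refine Finset.sum_congr rfl fun p hp ↦ ?_
  rw [integral_const_mul, setIntegral_indicator measurableSet_Iic, Ioc_inter_Iic,
    min_eq_right hyperbolaCap_le_left,
    intervalIntegral.integral_of_le (le_hyperbolaCap hA hAB hABx (hmem hp))]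

end HyperbolicRegion

section CapIntegrals

open Chebyshev

variable {A B x K κ : ℝ}

lemma theta_le_two_mul {t : ℝ} (ht : 0 ≤ t) : θ t ≤ 2 * t :=
  (theta_le_log4_mul_x ht).trans (by gcongr; exact log_four_lt_two.le)

lemma abs_theta_sub_theta_sub_le {a b : ℝ} (hK : 0 ≤ K) (hκ : 0 ≤ κ)
    (hθ : ∀ t : ℝ, 1 ≤ t → |θ t - t| ≤ K * t ^ κ) (ha : 1 ≤ a) (hab : a ≤ b) :
    |(θ b - θ a) - (b - a)| ≤ 2 * K * b ^ κ := calc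
  |(θ b - θ a) - (b - a)| = |(θ b - b) - (θ a - a)| := by ring_nf
  _ ≤ |θ b - b| + |θ a - a| := abs_sub _ _
  _ ≤ K * b ^ κ + K * a ^ κ := add_le_add (hθ b (ha.trans hab)) (hθ a ha)
  _ ≤ K * b ^ κ + K * b ^ κ := by gcongr
  _ = 2 * K * b ^ κ := by ring

variable (hA : 0 < A) (hAB : A ≤ B) (hABx : A * B ≤ x)
include hA hAB hABx

lemma sum_log_mul_hyperbolaCap_rpow_eq (hκ : 0 < κ) :
    ∑ p ∈ primesIoc A B, Real.log p * hyperbolaCap B x p ^ κ =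
      (θ B - θ A) * A ^ κ + ∫ v in A..B, κ * v ^ (κ - 1) * (θ (hyperbolaCap B x v) - θ A) := by
  have hprim (b : ℝ) : b ^ κ = A ^ κ + ∫ v in A..b, κ * v ^ (κ - 1) := by
    rw [intervalIntegral.integral_const_mul, integral_rpow (Or.inl (by linarith)), sub_add_cancel,
      mul_div_cancel₀ _ hκ.ne', add_sub_cancel]
  rw [← sum_log_mul_integral_eq_integral_mul_theta hA hAB hABx
      ((intervalIntegral.intervalIntegrable_rpow' (by linarith)).const_mul κ),
    theta_sub_theta_eq_sum_primesIoc hAB, Finset.sum_mul, ← Finset.sum_add_distrib]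
  exact Finset.sum_congr rfl fun p _ ↦ by rw [hprim (hyperbolaCap B x p), mul_add]

lemma theta_sub_mul_rpow_le : (θ B - θ A) * A ^ κ ≤ 2 * (x * A ^ (κ - 1)) := calc
  (θ B - θ A) * A ^ κ ≤ 2 * B * A ^ κ := by
    gcongr
    linarith [theta_le_two_mul (hA.le.trans hAB), theta_nonneg A]
  _ = 2 * (A * B * A ^ (κ - 1)) := by
    rw [Real.rpow_sub_one hA.ne']
    field_simp
  _ ≤ 2 * (x * A ^ (κ - 1)) := by gcongr

lemma integral_rpow_mul_theta_hyperbolaCap_le (hκ : κ ∈ Ioo 0 1) :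
    ∫ v in A..B, κ * v ^ (κ - 1) * (θ (hyperbolaCap B x v) - θ A) ≤
      2 * κ / (1 - κ) * (x * A ^ (κ - 1)) := by
  obtain ⟨hκ0, hκ1⟩ := hκ
  have hB : 0 < B := hA.trans_le hAB
  have hx : 0 ≤ x := (mul_pos hA hB).le.trans hABx
  have hzero : (0 : ℝ) ∉ uIcc A B := by
    rw [uIcc_of_le hAB]
    exact fun h ↦ hA.not_ge h.1
  have hbound (v : ℝ) (hv : v ∈ Icc A B) :
      κ * v ^ (κ - 1) * (θ (hyperbolaCap B x v) - θ A) ≤ 2 * κ * x * v ^ (κ - 2) := by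
    have hv0 : 0 < v := hA.trans_le hv.1
    have hcap := theta_le_two_mul (hA.le.trans (le_hyperbolaCap hA hAB hABx hv))
    calc
      _ ≤ κ * v ^ (κ - 1) * (2 * (x / v)) := by
        gcongr
        linarith [theta_nonneg A, hyperbolaCap_le_div (B := B) (x := x) (v := v)]
      _ = 2 * κ * x * (v ^ (κ - 1) / v) := by ring
      _ = _ := by rw [← Real.rpow_sub_one hv0.ne', sub_sub, one_add_one_eq_two]
  have hint : IntervalIntegrable
      (fun v ↦ κ * v ^ (κ - 1) * (θ (hyperbolaCap B x v) - θ A)) volume A B :=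
    ((intervalIntegrable_theta_hyperbolaCap hA hAB hx).sub intervalIntegrable_const)
      |>.continuousOn_mul (continuousOn_const.mul (continuousOn_id.rpow_const fun v hv ↦
        Or.inl (ne_of_mem_of_not_mem hv hzero)))
  calc
    _ ≤ ∫ v in A..B, 2 * κ * x * v ^ (κ - 2) :=
      intervalIntegral.integral_mono_on hAB hint
        ((intervalIntegral.intervalIntegrable_rpow (Or.inr hzero)).const_mul _) hbound
    _ = 2 * κ / (1 - κ) * (x * (A ^ (κ - 1) - B ^ (κ - 1))) := by
      rw [intervalIntegral.integral_const_mul, integral_rpow (Or.inr ⟨by linarith, hzero⟩),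
        show κ - 2 + 1 = -(1 - κ) by ring, neg_sub, ← neg_sub 1 κ]
      field_simp [sub_pos.2 hκ1 |>.ne']
      ring
    _ ≤ _ := by
      have : 0 < 1 - κ := sub_pos.2 hκ1
      gcongr
      exact sub_le_self _ (by positivity)

lemma integral_hyperbolaCap_rpow_le (hκ : κ ∈ Ico 0 1) :
    ∫ v in A..B, hyperbolaCap B x v ^ κ ≤ 1 / (1 - κ) * (x * A ^ (κ - 1)) := by
  obtain ⟨hκ0, hκ1⟩ := hκ
  have : 0 < 1 - κ := sub_pos.2 hκ1
  have hB : 0 < B := hA.trans_le hAB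
  have hx : 0 < x := (mul_pos hA hB).trans_le hABx
  have hbound (v : ℝ) (hv : v ∈ Icc A B) : hyperbolaCap B x v ^ κ ≤ x ^ κ * v ^ (-κ) := by
    have hv0 : 0 < v := hA.trans_le hv.1
    have hcap := hA.le.trans (le_hyperbolaCap hA hAB hABx hv)
    rw [Real.rpow_neg hv0.le, ← div_eq_mul_inv, ← Real.div_rpow hx.le hv0.le]
    exact Real.rpow_le_rpow hcap hyperbolaCap_le_div hκ0
  have hBx : B ≤ x / A := (le_div_iff₀' hA).2 hABx
  calc
    _ ≤ ∫ v in A..B, x ^ κ * v ^ (-κ) :=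
      intervalIntegral.integral_mono_on hAB (intervalIntegrable_hyperbolaCap_rpow hA hAB hκ0 hx.le)
        ((intervalIntegral.intervalIntegrable_rpow' (by linarith)).const_mul _) hbound
    _ = 1 / (1 - κ) * (x ^ κ * (B ^ (1 - κ) - A ^ (1 - κ))) := by
      rw [intervalIntegral.integral_const_mul, integral_rpow (Or.inl (by linarith)), neg_add_eq_sub]
      ring
    _ ≤ 1 / (1 - κ) * (x ^ κ * (x / A) ^ (1 - κ)) := by
      gcongr
      exact (sub_le_self _ (by positivity)).trans (by gcongr)
    _ = _ := by
      rw [Real.div_rpow hx.le hA.le, mul_div_assoc', ← Real.rpow_add hx, add_sub_cancel,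
        Real.rpow_one, ← neg_sub 1 κ, Real.rpow_neg hA.le, div_eq_mul_inv x]

end CapIntegrals

section WeightVersusArea

open Chebyshev

variable {A B x K κ : ℝ}
variable (hK : 0 ≤ K) (hθ : ∀ t : ℝ, 1 ≤ t → |θ t - t| ≤ K * t ^ κ)
  (hA : 1 ≤ A) (hAB : A ≤ B) (hABx : A * B ≤ x)
include hK hθ hA hAB hABx

lemma abs_primePairsWeight_sub_integral_le (hκ : 0 ≤ κ) :
    |primePairsWeight A B x - ∫ v in A..B, (θ (hyperbolaCap B x v) - θ A)| ≤
      2 * K * ∑ p ∈ primesIoc A B, Real.log p * hyperbolaCap B x p ^ κ := by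
  have hA0 : 0 < A := zero_lt_one.trans_le hA
  have hswap := sum_log_mul_integral_eq_integral_mul_theta hA0 hAB hABx (g := fun _ ↦ 1)
    intervalIntegrable_const
  simp only [intervalIntegral.integral_const, smul_eq_mul, mul_one, one_mul] at hswap
  rw [primePairsWeight_eq_sum hA0 hAB hABx, ← hswap, ← Finset.sum_sub_distrib, Finset.mul_sum]
  refine (Finset.abs_sum_le_sum_abs _ _).trans (Finset.sum_le_sum fun p hp ↦ ?_)
  obtain ⟨-, hAp, hpB⟩ := (mem_primesIoc hA0.le).1 hp
  have hlog : 0 ≤ Real.log p := Real.log_nonneg (hA.trans hAp.le)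
  rw [← mul_sub, abs_mul, abs_of_nonneg hlog, mul_left_comm]
  exact mul_le_mul_of_nonneg_left (abs_theta_sub_theta_sub_le hK hκ hθ hA
    (le_hyperbolaCap hA0 hAB hABx ⟨hAp.le, hpB⟩)) hlog

lemma abs_integral_sub_hyperbolaArea_le (hκ : 0 ≤ κ) :
    |(∫ v in A..B, (θ (hyperbolaCap B x v) - θ A)) - hyperbolaArea A B x| ≤
      2 * K * ∫ v in A..B, hyperbolaCap B x v ^ κ := by
  have hA0 : 0 < A := zero_lt_one.trans_le hA
  have hx : 0 ≤ x := (mul_pos hA0 (hA0.trans_le hAB)).le.trans hABx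
  rw [hyperbolaArea, ← intervalIntegral.integral_sub
      ((intervalIntegrable_theta_hyperbolaCap hA0 hAB hx).sub intervalIntegrable_const)
      ((intervalIntegrable_hyperbolaCap hA0 hAB hx).sub intervalIntegrable_const),
    ← intervalIntegral.integral_const_mul, ← Real.norm_eq_abs]
  exact intervalIntegral.norm_integral_le_of_norm_le hAB
    (ae_of_all _ fun v hv ↦ abs_theta_sub_theta_sub_le hK hκ hθ hA
      (le_hyperbolaCap hA0 hAB hABx (Ioc_subset_Icc_self hv)))
    ((intervalIntegrable_hyperbolaCap_rpow hA0 hAB hκ hx).const_mul _)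

lemma abs_primePairsWeight_sub_hyperbolaArea_le (hκ : 0 ≤ κ) :
    |primePairsWeight A B x - hyperbolaArea A B x| ≤
      2 * K * (∑ p ∈ primesIoc A B, Real.log p * hyperbolaCap B x p ^ κ +
        ∫ v in A..B, hyperbolaCap B x v ^ κ) := by
  rw [mul_add]
  exact (abs_sub_le _ _ _).trans
    (add_le_add (abs_primePairsWeight_sub_integral_le hK hθ hA hAB hABx hκ)
      (abs_integral_sub_hyperbolaArea_le hK hθ hA hAB hABx hκ))

lemma abs_primePairsWeight_sub_hyperbolaArea_le_sub_add (hκ : 0 ≤ κ) :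
    |primePairsWeight A B x - hyperbolaArea A B x| ≤
      4 * K * B ^ κ * ((B - A) + K * B ^ κ) := by
  have hA0 : 0 < A := zero_lt_one.trans_le hA
  have hB0 : 0 < B := hA0.trans_le hAB
  have hx : 0 ≤ x := (mul_pos hA0 hB0).le.trans hABx
  have hcap (v : ℝ) (hv : v ∈ Icc A B) : hyperbolaCap B x v ^ κ ≤ B ^ κ :=
    Real.rpow_le_rpow (hA0.le.trans (le_hyperbolaCap hA0 hAB hABx hv)) hyperbolaCap_le_left hκ
  have hsum : ∑ p ∈ primesIoc A B, Real.log p * hyperbolaCap B x p ^ κ ≤ (θ B - θ A) * B ^ κ := by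
    rw [theta_sub_theta_eq_sum_primesIoc hAB, Finset.sum_mul]
    refine Finset.sum_le_sum fun p hp ↦ ?_
    obtain ⟨-, hAp, hpB⟩ := (mem_primesIoc hA0.le).1 hp
    exact mul_le_mul_of_nonneg_left (hcap p ⟨hAp.le, hpB⟩) (Real.log_nonneg (hA.trans hAp.le))
  have hint : ∫ v in A..B, hyperbolaCap B x v ^ κ ≤ (B - A) * B ^ κ := by
    have := intervalIntegral.integral_mono_on hAB
      (intervalIntegrable_hyperbolaCap_rpow hA0 hAB hκ hx) intervalIntegrable_const hcap
    rwa [intervalIntegral.integral_const, smul_eq_mul] at this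
  have hθAB : θ B - θ A ≤ (B - A) + 2 * K * B ^ κ :=
    sub_le_iff_le_add'.1 (abs_le.1 (abs_theta_sub_theta_sub_le hK hκ hθ hA hAB)).2
  calc
    _ ≤ 2 * K * ((θ B - θ A) * B ^ κ + (B - A) * B ^ κ) :=
      (abs_primePairsWeight_sub_hyperbolaArea_le hK hθ hA hAB hABx hκ).trans (by gcongr)
    _ ≤ 2 * K * (((B - A) + 2 * K * B ^ κ) * B ^ κ + (B - A) * B ^ κ) := by gcongr
    _ = _ := by ring

lemma abs_primePairsWeight_sub_hyperbolaArea_le_mul_rpow_sub_one (hκ : κ ∈ Ioo 0 1) :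
    |primePairsWeight A B x - hyperbolaArea A B x| ≤ 6 * K / (1 - κ) * (x * A ^ (κ - 1)) := by
  have hA0 : 0 < A := zero_lt_one.trans_le hA
  have hκ' : 1 - κ ≠ 0 := (sub_pos.2 hκ.2).ne'
  calc
    _ ≤ 2 * K * (2 * (x * A ^ (κ - 1)) + 2 * κ / (1 - κ) * (x * A ^ (κ - 1)) +
        1 / (1 - κ) * (x * A ^ (κ - 1))) := by
      refine (abs_primePairsWeight_sub_hyperbolaArea_le hK hθ hA hAB hABx hκ.1.le).trans ?_
      rw [sum_log_mul_hyperbolaCap_rpow_eq hA0 hAB hABx hκ.1]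
      exact mul_le_mul_of_nonneg_left (add_le_add
        (add_le_add (theta_sub_mul_rpow_le hA0 hAB hABx)
          (integral_rpow_mul_theta_hyperbolaCap_le hA0 hAB hABx hκ))
        (integral_hyperbolaCap_rpow_le hA0 hAB hABx ⟨hκ.1.le, hκ.2⟩)) (by positivity)
    _ = _ := by
      field_simp
      ring

end WeightVersusArea

section CountVersusArea

open Chebyshev

variable {A B X K κ r y δ c : ℝ}

-- A gain of order `δ ^ 3` absorbs an error of order `δ`, except for `δ` so small that the error
-- is itself below the target.
lemma le_add_of_cube_div_le {P L W E : ℝ} (hy : 1 ≤ y) (hK : 1 ≤ K) (hL : 1 ≤ L) (hδ : 0 ≤ δ)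
    (hP : 0 ≤ P) (hW : 0 ≤ W) (hc : 0 ≤ c) (hE : E ≤ c * K * (δ * y + K) * P)
    (hgain : 4 * K ≤ δ * y ^ 2 → δ ^ 3 * (P * y ^ 3) / (8 * L) ≤ W) :
    E ≤ W + (8 * c ^ 2 + 5 * c) * K ^ 2 * P * L ^ 2 := by
  have hKL : K ≤ K * L := le_mul_of_one_le_right (by linarith) hL
  have hbound {m : ℝ} (hm : δ * y + K ≤ m * (K * L)) (hm' : c * m ≤ 8 * c ^ 2 + 5 * c) :
      E ≤ (8 * c ^ 2 + 5 * c) * K ^ 2 * P * L ^ 2 := calc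
    E ≤ c * K * (m * (K * L)) * P := hE.trans (by gcongr)
    _ = c * m * (K ^ 2 * P * L) := by ring
    _ ≤ (8 * c ^ 2 + 5 * c) * (K ^ 2 * P * L ^ 2) := by
      gcongr
      exact le_self_pow₀ hL two_ne_zero
    _ = _ := by ring
  rcases lt_or_ge (δ * y ^ 2) (4 * K) with hδy | hδy
  · have hy2 : δ * y ≤ δ * y ^ 2 := by
      gcongr
      exact le_self_pow₀ hy two_ne_zero
    linarith [hbound (m := 5) (by linarith) (by nlinarith)]
  rcases lt_or_ge ((δ * y) ^ 2) (8 * c * (K * L)) with hsmall | hlarge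
  · linarith [hbound (m := 8 * c + 2) (by nlinarith) (by nlinarith)]
  · have hmain : c * K * (δ * y) * P ≤ W := by
      refine le_trans ?_ (hgain hδy)
      rw [le_div_iff₀ (by linarith)]
      calc
        c * K * (δ * y) * P * (8 * L) = 8 * c * (K * L) * (δ * y * P) := by ring
        _ ≤ (δ * y) ^ 2 * (δ * y * P) := by gcongr
        _ = δ ^ 3 * (P * y ^ 3) := by ring
    have hrest : c * K * K * P ≤ (8 * c ^ 2 + 5 * c) * K ^ 2 * P * L ^ 2 := calc
      c * K * K * P = c * (K ^ 2 * P) * 1 := by ring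
      _ ≤ (8 * c ^ 2 + 5 * c) * (K ^ 2 * P) * L ^ 2 := by
        gcongr
        · nlinarith
        · exact one_le_pow₀ hL
      _ = _ := by ring
    linarith

lemma le_mul_of_sq_mul_le {u : ℝ} (hu : u ∈ Icc 0 1) (hX : 0 ≤ X) (hAX : A ^ 2 * (1 + u) ≤ X ^ 2) :
    A ≤ (1 - 2 * (u / 8)) * X := by
  obtain ⟨hu0, hu1⟩ := hu
  have hfactor : 1 ≤ (1 - 2 * (u / 8)) ^ 2 * (1 + u) := by nlinarith [mul_nonneg hu0 hu0]
  refine abs_le_of_sq_le_sq' ?_ (mul_nonneg (by linarith) hX) |>.2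
  nlinarith [sq_nonneg (A * (1 - 2 * (u / 8))), sq_nonneg A, sq_nonneg (1 - 2 * (u / 8))]

lemma exists_one_le_pow_eq {a : ℝ} (ha : 1 ≤ a) {n : ℕ} (hn : n ≠ 0) : ∃ y : ℝ, 1 ≤ y ∧ y ^ n = a :=
  ⟨a ^ (n : ℝ)⁻¹, Real.one_le_rpow ha (by positivity), Real.rpow_inv_natCast_pow (by linarith) hn⟩

lemma pow_rpow_eq_pow {m n : ℕ} {a : ℝ} (hy : 0 ≤ y) (ha : m * a = n) : (y ^ m) ^ a = y ^ n := by
  rw [← Real.rpow_natCast_mul hy, ha, Real.rpow_natCast]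

lemma sqrt_pow_six (hy : 0 ≤ y) : √(y ^ 6) = y ^ 3 := by
  rw [show y ^ 6 = (y ^ 3) ^ 2 by ring, Real.sqrt_sq (by positivity)]

lemma abs_primePairsWeight_sub_hyperbolaArea_le_of_le_two (hK : 0 ≤ K)
    (hθ : ∀ t : ℝ, 1 ≤ t → |θ t - t| ≤ K * t ^ (2 / 3 : ℝ)) (hy : 1 ≤ y) (hA : 1 ≤ A)
    (hAB : A ≤ B) (hABy : A * B ≤ (y ^ 6) ^ 2) (hAy : A ≤ y ^ 6) (hBr : B ≤ A * r)
    (hr : r ∈ Icc 1 2) :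
    |primePairsWeight A B ((y ^ 6) ^ 2) - hyperbolaArea A B ((y ^ 6) ^ 2)| ≤
      144 * K * ((r - 1) / 8 * y + K) * ((y ^ 6) ^ 2 / y ^ 3) := by
  obtain ⟨hr1, hr2⟩ := hr
  have hB : B ^ (2 / 3 : ℝ) ≤ 2 * y ^ 4 := calc
    B ^ (2 / 3 : ℝ) ≤ (2 * y ^ 6) ^ (2 / 3 : ℝ) := by
      gcongr
      · linarith
      · nlinarith
    _ = 2 ^ (2 / 3 : ℝ) * y ^ 4 := by
      rw [Real.mul_rpow zero_le_two (by positivity),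
        pow_rpow_eq_pow (n := 4) (by linarith) (by norm_num)]
    _ ≤ 2 * y ^ 4 := by
      gcongr
      exact Real.rpow_le_self_of_one_le one_le_two (by norm_num)
  have hBA : B - A ≤ y ^ 6 * (r - 1) := by nlinarith
  calc
    _ ≤ 4 * K * B ^ (2 / 3 : ℝ) * ((B - A) + K * B ^ (2 / 3 : ℝ)) :=
      abs_primePairsWeight_sub_hyperbolaArea_le_sub_add hK hθ hA hAB hABy (by norm_num)
    _ ≤ 4 * K * (2 * y ^ 4) * (y ^ 6 * (r - 1) + K * (2 * y ^ 4)) := by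
      have : 0 ≤ B - A := sub_nonneg.2 hAB
      have : 0 ≤ B := by linarith
      gcongr
    _ = 64 * K * ((r - 1) / 8) * y ^ 10 + 16 * K ^ 2 * y ^ 8 := by ring
    _ ≤ 144 * K * ((r - 1) / 8) * y ^ 10 + 144 * K ^ 2 * y ^ 9 := by
      have : 0 ≤ r - 1 := sub_nonneg.2 hr1
      gcongr <;> norm_num
    _ = _ := by field_simp

lemma abs_primePairsWeight_sub_hyperbolaArea_le_of_pow_six (hK : 0 ≤ K)
    (hθ : ∀ t : ℝ, 1 ≤ t → |θ t - t| ≤ K * t ^ (2 / 3 : ℝ)) (hy : 1 ≤ y) (hyB : y ^ 6 ≤ B)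
    {x : ℝ} (hx : y ^ 6 * B ≤ x) :
    |primePairsWeight (y ^ 6) B x - hyperbolaArea (y ^ 6) B x| ≤
      144 * K * (1 / 8 * y + K) * (x / y ^ 3) := by
  have hy6 : 1 ≤ y ^ 6 := one_le_pow₀ hy
  have hx0 : 0 ≤ x := hx.trans' (by nlinarith)
  have hrpow : (y ^ 6) ^ (2 / 3 - 1 : ℝ) = (y ^ 2)⁻¹ := by
    rw [show (2 / 3 - 1 : ℝ) = -(1 / 3) by norm_num, Real.rpow_neg (by positivity),
      pow_rpow_eq_pow (n := 2) (by linarith) (by norm_num)]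
  calc
    _ ≤ 6 * K / (1 - 2 / 3) * (x * (y ^ 6) ^ (2 / 3 - 1 : ℝ)) :=
      abs_primePairsWeight_sub_hyperbolaArea_le_mul_rpow_sub_one hK hθ hy6 hyB hx
        ⟨by norm_num, by norm_num⟩
    _ = 144 * K * (1 / 8 * y) * (x / y ^ 3) := by
      rw [hrpow]
      field_simp
      ring
    _ ≤ _ := by
      gcongr
      exact le_add_of_nonneg_right hK

variable (hK : 1 ≤ K) (hX : 0 < X) (hA : Real.exp 1 ≤ A) (hXB : X ≤ B)
include hK hX hA hXB

lemma hyperbolaArea_mem_Icc_of_abs_primePairsWeight_sub_le (hκ : 0 ≤ κ)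
    (hθ : ∀ t : ℝ, 1 ≤ t → |θ t - t| ≤ K * t ^ κ) (hy : 1 ≤ y) (hyX : y ^ 2 ≤ X ^ (1 - κ))
    (hδ : 0 < δ) (hAX : A ≤ (1 - 2 * δ) * X) (hc : 0 ≤ c)
    (herr : |primePairsWeight A B (X ^ 2) - hyperbolaArea A B (X ^ 2)| ≤
      c * K * (δ * y + K) * (X ^ 2 / y ^ 3)) :
    hyperbolaArea A B (X ^ 2) ∈ Icc
      (((primePairs A B (X ^ 2)).card - (8 * c ^ 2 + 5 * c) * K ^ 2 * (X ^ 2 / y ^ 3)) *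
        Real.log A ^ 2)
      (((primePairs A B (X ^ 2)).card + (8 * c ^ 2 + 5 * c) * K ^ 2 * (X ^ 2 / y ^ 3)) *
        Real.log B ^ 2) := by
  have hK0 : 0 ≤ K := by linarith
  have hA1 : 1 ≤ A := (Real.one_le_exp zero_le_one).trans hA
  have hAB : A ≤ B := by nlinarith
  have hP : 0 ≤ X ^ 2 / y ^ 3 := by positivity
  have hPy : X ^ 2 / y ^ 3 * y ^ 3 = X ^ 2 := div_mul_cancel₀ _ (by positivity)
  have hcond (h : 4 * K ≤ δ * y ^ 2) : 4 * K ≤ δ * X ^ (1 - κ) := h.trans (by gcongr)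
  obtain ⟨hlower, hupper⟩ := abs_sub_le_iff.1 herr
  constructor
  · have := le_add_of_cube_div_le hy hK (one_le_log hA) hδ.le hP
      (sub_nonneg.2 (card_mul_sq_log_le_primePairsWeight hA1)) hc hlower fun h ↦ by
        rw [hPy]
        exact rectangle_gain_le_primePairsWeight_sub hK0 hκ hθ hX hXB hδ hAX (hcond h) hA
    linarith
  · have := le_add_of_cube_div_le hy hK (one_le_log (hA.trans hAB)) hδ.le hP
      (sub_nonneg.2 (primePairsWeight_le_card_mul_sq_log hA1)) hc hupper fun h ↦ by
        rw [hPy]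
        exact rectangle_gain_le_sub_primePairsWeight hK0 hκ hθ hX hXB hδ hAX (hcond h) hA1
    linarith

variable (hθ : ∀ t : ℝ, 1 ≤ t → |θ t - t| ≤ K * t ^ (2 / 3 : ℝ)) (hAX : A ^ 2 * r = X ^ 2)
  (hABX : A * B ≤ X ^ 2)
include hθ hAX hABX

-- The constant is `166608 = 8 * 144 ^ 2 + 5 * 144`.
lemma hyperbolaArea_mem_Icc_of_le_two (hr : r ∈ Ioc 1 2) :
    hyperbolaArea A B (X ^ 2) ∈ Icc
      (((primePairs A B (X ^ 2)).card - 166608 * K ^ 2 * (X ^ 2 / √X)) * Real.log A ^ 2)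
      (((primePairs A B (X ^ 2)).card + 166608 * K ^ 2 * (X ^ 2 / √X)) * Real.log B ^ 2) := by
  obtain ⟨hr1, hr2⟩ := hr
  have hA1 : 1 ≤ A := (Real.one_le_exp zero_le_one).trans hA
  have hAX' : A ≤ (1 - 2 * ((r - 1) / 8)) * X :=
    le_mul_of_sq_mul_le ⟨by linarith, by linarith⟩ hX.le (by rw [add_sub_cancel, hAX])
  have hAleX : A ≤ X := by nlinarith
  obtain ⟨y, hy, rfl⟩ := exists_one_le_pow_eq (hA1.trans hAleX) (n := 6) (by norm_num)
  have hy0 : 0 ≤ y := by linarith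
  have herr := abs_primePairsWeight_sub_hyperbolaArea_le_of_le_two (r := r) (by linarith) hθ hy hA1
    (hAleX.trans hXB) hABX hAleX (by nlinarith) ⟨hr1.le, hr2⟩
  have harea := hyperbolaArea_mem_Icc_of_abs_primePairsWeight_sub_le hK hX hA hXB (by norm_num) hθ
    hy (pow_rpow_eq_pow hy0 (by norm_num)).ge (by linarith) hAX' (by norm_num) herr
  norm_num only at harea
  rwa [sqrt_pow_six hy0]

lemma hyperbolaArea_mem_Icc_of_two_le (hr : 2 ≤ r) :
    hyperbolaArea A B (X ^ 2) ∈ Icc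
      (((primePairs A B (X ^ 2)).card - 166608 * K ^ 2 * (X ^ 2 / √A)) * Real.log A ^ 2)
      (((primePairs A B (X ^ 2)).card + 166608 * K ^ 2 * (X ^ 2 / √A)) * Real.log B ^ 2) := by
  have hA1 : 1 ≤ A := (Real.one_le_exp zero_le_one).trans hA
  have hAX' : A ≤ (1 - 2 * (1 / 8)) * X :=
    le_mul_of_sq_mul_le (by norm_num) hX.le (by nlinarith)
  have hAleX : A ≤ X := by linarith
  obtain ⟨y, hy, rfl⟩ := exists_one_le_pow_eq hA1 (n := 6) (by norm_num)
  have hy0 : 0 ≤ y := by linarith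
  have hyX : y ^ 2 ≤ X ^ (1 - 2 / 3 : ℝ) := calc
    y ^ 2 = (y ^ 6) ^ (1 - 2 / 3 : ℝ) := (pow_rpow_eq_pow hy0 (by norm_num)).symm
    _ ≤ X ^ (1 - 2 / 3 : ℝ) := by gcongr
  have herr := abs_primePairsWeight_sub_hyperbolaArea_le_of_pow_six (by linarith) hθ hy
    (hAleX.trans hXB) hABX
  have harea := hyperbolaArea_mem_Icc_of_abs_primePairsWeight_sub_le hK hX hA hXB (by norm_num) hθ
    hy hyX (by norm_num) hAX' (by norm_num) herr
  norm_num only at harea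
  rwa [sqrt_pow_six hy0]

lemma hyperbolaArea_mem_Icc (hr : 1 < r) :
    hyperbolaArea A B (X ^ 2) ∈ Icc
      (((primePairs A B (X ^ 2)).card - 166608 * K ^ 2 * (X ^ 2 / √A)) * Real.log A ^ 2)
      (((primePairs A B (X ^ 2)).card + 166608 * K ^ 2 * (X ^ 2 / √A)) * Real.log B ^ 2) := by
  rcases le_or_gt 2 r with hr2 | hr2
  · exact hyperbolaArea_mem_Icc_of_two_le hK hX hA hXB hθ hAX hABX hr2
  · have hA0 : 0 < A := (Real.exp_pos 1).trans_le hA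
    have hAleX : A ≤ X := by nlinarith
    refine Icc_subset_Icc ?_ ?_
      (hyperbolaArea_mem_Icc_of_le_two hK hX hA hXB hθ hAX hABX ⟨hr, hr2.le⟩)
    all_goals gcongr

end CountVersusArea

section Assembly

variable {r x σ : ℝ}

lemma exists_mem_Icc_abs_sub_mul_le {N I a b T L : ℝ} (ha : 0 < a) (hab : a ≤ b) (hT : 0 ≤ T)
    (hL : L ≠ 0) (hI : I ∈ Icc ((N - T) * a ^ 2) ((N + T) * b ^ 2)) :
    ∃ t ∈ Icc ((L / (2 * b)) ^ 2) ((L / (2 * a)) ^ 2), |N - t * (4 * I / L ^ 2)| ≤ T := by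
  have hb : 0 < b := ha.trans_le hab
  have hendpoint {c : ℝ} (hc : 0 < c) : (L / (2 * c)) ^ 2 * (4 * I / L ^ 2) = I / c ^ 2 := by
    field_simp
    norm_num
  have hle : (L / (2 * b)) ^ 2 ≤ (L / (2 * a)) ^ 2 := by
    rw [div_pow, div_pow]
    gcongr
  have hIa : N - T ≤ I / a ^ 2 := (le_div_iff₀ (by positivity)).2 hI.1
  have hIb : I / b ^ 2 ≤ N + T := (div_le_iff₀ (by positivity)).2 hI.2
  rcases le_or_gt N (I / b ^ 2) with hNb | hNb
  · refine ⟨_, ⟨le_rfl, hle⟩, ?_⟩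
    rw [hendpoint hb, abs_le]
    constructor <;> linarith
  rcases le_or_gt (I / a ^ 2) N with hNa | hNa
  · refine ⟨_, ⟨hle, le_rfl⟩, ?_⟩
    rw [hendpoint ha, abs_le]
    constructor <;> linarith
  have hM : 0 < 4 * I / L ^ 2 := by
    by_contra! h
    have := mul_le_mul_of_nonpos_right hle h
    rw [hendpoint ha, hendpoint hb] at this
    linarith
  refine ⟨N / (4 * I / L ^ 2), ⟨?_, ?_⟩, ?_⟩
  · rw [le_div_iff₀ hM, hendpoint hb]
    exact hNb.le
  · rw [div_le_iff₀ hM, hendpoint ha]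
    exact hNa.le
  · rwa [div_mul_cancel₀ _ hM.ne', sub_self, abs_zero]

lemma NFIX_eq_card_primePairs :
    NFIX r σ x = (primePairs √(x / r) √(r ^ σ * x) x).card := by
  refine Nat.subtype_card _ fun pq ↦ ?_
  rw [mem_primePairs (Real.sqrt_nonneg _)]
  tauto

section SqrtBounds

variable (hr : 0 < r) (hx : 0 < x)
include hr hx

lemma log_sqrt_div : Real.log √(x / r) = (Real.log x - Real.log r) / 2 := by
  rw [Real.log_sqrt (by positivity), Real.log_div hx.ne' hr.ne']

lemma log_sqrt_rpow_mul : Real.log √(r ^ σ * x) = (Real.log x + σ * Real.log r) / 2 := by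
  rw [Real.log_sqrt (by positivity), Real.log_mul (by positivity) hx.ne', Real.log_rpow hr,
    add_comm]

lemma sqrt_div_mul_sqrt_rpow_mul : √(x / r) * √(r ^ σ * x) = x * r ^ (-(1 - σ) / 2) := by
  refine Real.log_injOn_pos (mem_Ioi.2 (by positivity)) (mem_Ioi.2 (by positivity)) ?_
  rw [Real.log_mul (by positivity) (by positivity), log_sqrt_div hr hx, log_sqrt_rpow_mul hr hx,
    Real.log_mul hx.ne' (by positivity), Real.log_rpow hr]
  ring

lemma div_sqrt_sqrt_div : x / √√(x / r) = x ^ (3 / 4 : ℝ) * r ^ (1 / 4 : ℝ) := by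
  refine Real.log_injOn_pos (mem_Ioi.2 (by positivity)) (mem_Ioi.2 (by positivity)) ?_
  rw [Real.log_div hx.ne' (by positivity), Real.log_sqrt (by positivity), log_sqrt_div hr hx,
    Real.log_mul (by positivity) (by positivity), Real.log_rpow hx, Real.log_rpow hr]
  ring

end SqrtBounds

lemma sqrt_le_sqrt_rpow_mul (hr : 1 ≤ r) (hx : 0 ≤ x) (hσ : 0 ≤ σ) : √x ≤ √(r ^ σ * x) :=
  Real.sqrt_le_sqrt (le_mul_of_one_le_left hx (Real.one_le_rpow hr hσ))

lemma sqrt_div_mul_sqrt_rpow_mul_le (hr : 1 ≤ r) (hx : 0 < x) (hσ : σ ≤ 1) :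
    √(x / r) * √(r ^ σ * x) ≤ x := by
  rw [sqrt_div_mul_sqrt_rpow_mul (by linarith) hx]
  exact mul_le_of_le_one_right hx.le (Real.rpow_le_one_of_one_le_of_nonpos hr (by linarith))

lemma hyperbolaArea_sqrt_eq (hr : 1 ≤ r) (hx : 0 < x) (hσ : σ ∈ Icc 0 1) :
    hyperbolaArea √(x / r) √(r ^ σ * x) x =
      x * (σ * Real.log r + 1 - 2 * r ^ (-(1 - σ) / 2) + 1 / r) := by
  have hr0 : 0 < r := by linarith
  have hB : √(r ^ σ * x) ^ 2 = r ^ σ * x := Real.sq_sqrt (by positivity)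
  have hAB : √(x / r) ≤ √(r ^ σ * x) :=
    (Real.sqrt_le_sqrt (div_le_self hx.le hr)).trans (sqrt_le_sqrt_rpow_mul hr hx.le hσ.1)
  have hxB : x ≤ √(r ^ σ * x) ^ 2 :=
    hB.ge.trans' (le_mul_of_one_le_left hx.le (Real.one_le_rpow hr hσ.1))
  rw [hyperbolaArea_eq (by positivity) hAB (sqrt_div_mul_sqrt_rpow_mul_le hr hx hσ.2) hxB,
    sqrt_div_mul_sqrt_rpow_mul hr0 hx, hB, mul_div_cancel_right₀ _ hx.ne', Real.log_rpow hr0,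
    Real.sq_sqrt (by positivity)]
  ring

lemma exists_mem_Icc_abs_NFIX_sub_le {K : ℝ} (hK : 1 ≤ K)
    (hθ : ∀ t : ℝ, 1 ≤ t → |Chebyshev.theta t - t| ≤ K * t ^ (2 / 3 : ℝ)) (hσ : σ ∈ Icc 0 1)
    (hr : 1 < r) (hA : Real.exp 1 ≤ √(x / r)) :
    ∃ t ∈ Icc ((1 - σ * Real.log r / (Real.log x + σ * Real.log r)) ^ 2)
        ((1 + Real.log r / (Real.log x - Real.log r)) ^ 2),
      |(NFIX r σ x : ℝ) - t * (4 * x / Real.log x ^ 2) *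
          (σ * Real.log r + 1 - 2 * r ^ (-(1 - σ) / 2) + 1 / r)| ≤
        166608 * K ^ 2 * x ^ (3 / 4 : ℝ) * r ^ (1 / 4 : ℝ) := by
  have hr0 : 0 < r := by linarith
  have hx : 0 < x := by
    simpa [hr0] using Real.sqrt_pos.1 ((Real.exp_pos 1).trans_le hA)
  have hlogA := log_sqrt_div hr0 hx
  have hlogB := log_sqrt_rpow_mul hr0 hx (σ := σ)
  have hlogr : 0 < Real.log r := Real.log_pos hr
  have hσlogr : 0 ≤ σ * Real.log r := mul_nonneg hσ.1 hlogr.le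
  have hlogx : Real.log r < Real.log x := by linarith [one_le_log hA]
  have harea := hyperbolaArea_mem_Icc hK (Real.sqrt_pos.2 hx) hA
    (sqrt_le_sqrt_rpow_mul hr.le hx.le hσ.1) hθ
    (by rw [Real.sq_sqrt (by positivity), Real.sq_sqrt hx.le, div_mul_cancel₀ _ hr0.ne'])
    (by rw [Real.sq_sqrt hx.le]; exact sqrt_div_mul_sqrt_rpow_mul_le hr.le hx hσ.2) hr
  rw [Real.sq_sqrt hx.le, div_sqrt_sqrt_div hr0 hx, ← mul_assoc, ← NFIX_eq_card_primePairs,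
    hlogA, hlogB] at harea
  obtain ⟨t, ht, hNt⟩ := exists_mem_Icc_abs_sub_mul_le (L := Real.log x) (by linarith)
    (by linarith) (by positivity) (by linarith) harea
  have hlower : 1 - σ * Real.log r / (Real.log x + σ * Real.log r) =
      Real.log x / (2 * ((Real.log x + σ * Real.log r) / 2)) := by
    rw [one_sub_div (by linarith), add_sub_cancel_right, mul_div_cancel₀ _ two_ne_zero]
  have hupper : 1 + Real.log r / (Real.log x - Real.log r) =
      Real.log x / (2 * ((Real.log x - Real.log r) / 2)) := by
    rw [one_add_div (by linarith), sub_add_cancel, mul_div_cancel₀ _ two_ne_zero]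
  rw [hyperbolaArea_sqrt_eq hr.le hx hσ] at hNt
  refine ⟨t, by rwa [hlower, hupper], le_of_eq_of_le ?_ hNt⟩
  congr 2
  ring

end Assembly

theorem NFIX_asymptotics_general {β : ℝ} (hβ : β < 2 / 3)
    (hζ : ∀ s : ℂ, β < s.re → riemannZeta s ≠ 0) :
    ∃ C : ℝ, 0 < C ∧ ∀ r x σ : ℝ, σ ∈ Icc (0 : ℝ) 1 → 1 < r → Real.exp 1 ≤ √(x / r) →
      ∃ t ∈ Icc ((1 - σ * Real.log r / (Real.log x + σ * Real.log r)) ^ 2)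
          ((1 + Real.log r / (Real.log x - Real.log r)) ^ 2),
        |(NFIX r σ x : ℝ) - t * (4 * x / Real.log x ^ 2) *
            (σ * Real.log r + 1 - 2 * r ^ (-(1 - σ) / 2) + 1 / r)| ≤
          C * x ^ (3 / 4 : ℝ) * r ^ (1 / 4 : ℝ) := by
  obtain ⟨K, hK, hθ⟩ := exists_abs_theta_sub_le hβ ⟨by norm_num, by norm_num⟩ hζ
  exact ⟨166608 * K ^ 2, by positivity, fun r x σ hσ hr hA ↦
    exists_mem_Icc_abs_NFIX_sub_le hK hθ hσ hr hA⟩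

lemma riemannZeta_ne_zero_of_half_lt_re (hRH : RiemannHypothesis) {s : ℂ} (hs : 1 / 2 < s.re) :
    riemannZeta s ≠ 0 := by
  intro hζ
  refine hs.ne' (hRH s hζ ?_ fun h1 ↦ riemannZeta_one_ne_zero (h1 ▸ hζ))
  rintro ⟨n, rfl⟩
  norm_num at hs
  linarith [Nat.cast_nonneg (α := ℝ) n]

/-- Theorem 4.4 of the paper (count of fixed-bound RSA integers, under RH). -/
theorem NFIX_asymptotics (hRH : RiemannHypothesis) :
    ∃ C : ℝ, 0 < C ∧ ∀ r x σ : ℝ, σ ∈ Set.Icc (0 : ℝ) 1 → 1 < r →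
      Real.log r < Real.log x → (2657 : ℝ) ≤ Real.sqrt (x / r) →
      ∃ atil ∈ Set.Icc ((1 - σ * Real.log r / (Real.log x + σ * Real.log r)) ^ 2)
                       ((1 + Real.log r / (Real.log x - Real.log r)) ^ 2),
        |(NFIX r σ x : ℝ)
            - atil * (4 * x / (Real.log x) ^ 2)
              * (σ * Real.log r + 1 - 2 * r ^ (-(1 - σ) / 2) + 1 / r)|
          ≤ C * x ^ ((3 : ℝ) / 4) * r ^ ((1 : ℝ) / 4) := by
  obtain ⟨C, hC, h⟩ := NFIX_asymptotics_general (by norm_num)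
    fun _ hs ↦ riemannZeta_ne_zero_of_half_lt_re hRH hs
  exact ⟨C, hC, fun r x σ hσ hr _ hA ↦
    h r x σ hσ hr (hA.trans' (by linarith [Real.exp_one_lt_d9]))⟩
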